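/- arXiv:1205.5226 — 8 statements merged into one kernel-verified Lean document; each statement's English description precedes it below -/
import Mathlib

section
/- Under the piecewise expanding unimodal setup, for every x₀ ∈ (c₂, c₁) and every ε > 0 there exists a positive integer ℓ such that the set f^{−ℓ}(x₀) = {y ∈ I : f^ℓ(y) = x₀} is ε-dense in I = [a,b], i.e., every point of I lies within distance ε of some point y with f^ℓ(y) = x₀. -/
open Filter Topology


lemma aux_expand (g : ℝ → ℝ) (u v : ℝ) (hg : ContinuousOn g (Set.Icc u v))
    (hd : DifferentiableOn ℝ g (Set.Icc u v))
    (h1 : ∀ x ∈ Set.Icc u v, 1 < derivWithin g (Set.Icc u v) x) :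
    ∀ x ∈ Set.Icc u v, ∀ y ∈ Set.Icc u v, x < y → y - x < g y - g x := by
  have hm : StrictMonoOn (fun x => g x - x) (Set.Icc u v) := by
    apply strictMonoOn_of_deriv_pos (convex_Icc u v) (hg.sub continuousOn_id)
    intro x hx
    rw [interior_Icc] at hx
    have hx' := Set.Ioo_subset_Icc_self hx
    have hn : Set.Icc u v ∈ 𝓝 x := Icc_mem_nhds hx.1 hx.2
    have hD : HasDerivAt g (derivWithin g (Set.Icc u v) x) x :=
      ((hd x hx').hasDerivWithinAt).hasDerivAt hn
    have := (hD.sub (hasDerivAt_id x)).deriv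
    have h2 := h1 x hx'
    rw [this]
    linarith
  intro x hx y hy hxy
  have := hm hx hy hxy
  simp only at this
  linarith

lemma aux_unif (g : ℝ → ℝ) (u v δ : ℝ) (hδ : 0 < δ) (hg : ContinuousOn g (Set.Icc u v))
    (h : ∀ x ∈ Set.Icc u v, ∀ y ∈ Set.Icc u v, x < y → y - x < g y - g x) :
    ∃ η > 0, ∀ x ∈ Set.Icc u v, ∀ y ∈ Set.Icc u v, δ ≤ y - x → y - x + η ≤ g y - g x := by
  have hK : IsCompact ((Set.Icc u v ×ˢ Set.Icc u v) ∩ {p : ℝ × ℝ | δ ≤ p.2 - p.1}) := by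
    apply (isCompact_Icc.prod isCompact_Icc).inter_right
    exact isClosed_le continuous_const (continuous_snd.sub continuous_fst)
  have hc : ContinuousOn (fun p : ℝ × ℝ => g p.2 - g p.1 - (p.2 - p.1))
      ((Set.Icc u v ×ˢ Set.Icc u v) ∩ {p : ℝ × ℝ | δ ≤ p.2 - p.1}) := by
    refine ContinuousOn.sub (ContinuousOn.sub ?_ ?_) ?_
    · exact hg.comp continuous_snd.continuousOn (fun p hp => hp.1.2)
    · exact hg.comp continuous_fst.continuousOn (fun p hp => hp.1.1)
    · exact (continuous_snd.sub continuous_fst).continuousOn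
  rcases Set.eq_empty_or_nonempty
    ((Set.Icc u v ×ˢ Set.Icc u v) ∩ {p : ℝ × ℝ | δ ≤ p.2 - p.1}) with he | hne
  · refine ⟨1, one_pos, fun x hx y hy hxy => ?_⟩
    have : (x, y) ∈ ((Set.Icc u v ×ˢ Set.Icc u v) ∩ {p : ℝ × ℝ | δ ≤ p.2 - p.1}) :=
      ⟨⟨hx, hy⟩, hxy⟩
    rw [he] at this
    exact this.elim
  · obtain ⟨p, hp, hmin⟩ := hK.exists_isMinOn hne hc
    have hp2 : δ ≤ p.2 - p.1 := hp.2
    refine ⟨g p.2 - g p.1 - (p.2 - p.1), ?_, fun x hx y hy hxy => ?_⟩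
    · have := h p.1 hp.1.1 p.2 hp.1.2 (by linarith)
      linarith
    · have : (x, y) ∈ ((Set.Icc u v ×ˢ Set.Icc u v) ∩ {p : ℝ × ℝ | δ ≤ p.2 - p.1}) :=
        ⟨⟨hx, hy⟩, hxy⟩
      have := hmin this
      simp only [Set.mem_ofPred_eq] at this
      linarith

/-- Under the piecewise expanding unimodal setup, for every `x₀ ∈ (c₂, c₁)` and every
`ε > 0` there is `ℓ ≥ 1` such that `f^{-ℓ}(x₀)` is `ε`-dense in `I = [a, b]`. -/
theorem stmt_1
    -- Setup: piecewise expanding unimodal map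
    (f : ℝ → ℝ) (a b c : ℝ)
    (hab : a < b) (hc : c ∈ Set.Ioo a b)
    (hmap : Set.MapsTo f (Set.Icc a b) (Set.Icc a b))
    (hcont : ContinuousOn f (Set.Icc a b))
    (hfa : f a = a) (hfb : f b = a)
    (hC3L : ContDiffOn ℝ 3 f (Set.Icc a c))
    (hC3R : ContDiffOn ℝ 3 f (Set.Icc c b))
    (hd1 : ∀ x ∈ Set.Icc a c, 1 < derivWithin f (Set.Icc a c) x)
    (hd2 : ∀ x ∈ Set.Icc c b, derivWithin f (Set.Icc c b) x < -1)
    (hnotper : ∀ n : ℕ, 1 ≤ n → f^[n] c ≠ c)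
    (hinf : (Set.range fun k : ℕ => f^[k + 1] c).Infinite)
    (hmix : ∀ U V : Set ℝ,
      (∃ U₀, IsOpen U₀ ∧ U = U₀ ∩ Set.Icc (f^[2] c) (f^[1] c)) →
      (∃ V₀, IsOpen V₀ ∧ V = V₀ ∩ Set.Icc (f^[2] c) (f^[1] c)) →
      U.Nonempty → V.Nonempty → ∃ N : ℕ, ∀ n, N ≤ n → (f^[n] '' U ∩ V).Nonempty) :
    -- Conclusion
    ∀ x₀ ∈ Set.Ioo (f^[2] c) (f^[1] c), ∀ ε : ℝ, 0 < ε →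
      ∃ ℓ : ℕ, 0 < ℓ ∧ ∀ x ∈ Set.Icc a b, ∃ y ∈ Set.Icc a b, f^[ℓ] y = x₀ ∧ |x - y| ≤ ε := by
  intro x₀ hx₀ ε hε
  have hLc : ContinuousOn f (Set.Icc a c) := hC3L.continuousOn
  have hRc : ContinuousOn f (Set.Icc c b) := hC3R.continuousOn
  obtain ⟨hac, hcb⟩ := hc
  have hL := aux_expand f a c hLc (hC3L.differentiableOn (by norm_num)) hd1
  have hR := aux_expand (fun x => - f x) c b hRc.neg
    ((hC3R.differentiableOn (by norm_num)).neg) (by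
      intro x hx
      have := hd2 x hx
      rw [derivWithin.fun_neg]
      linarith)
  simp only [Function.iterate_succ, Function.iterate_zero, Function.comp_apply, id] at hx₀ hmix
  have hcI : c ∈ Set.Icc a b := ⟨hac.le, hcb.le⟩
  have hmax : ∀ x ∈ Set.Icc a b, f x ≤ f c := by
    intro x hx
    rcases lt_trichotomy x c with h | h | h
    · have := hL x ⟨hx.1, h.le⟩ c ⟨hac.le, le_rfl⟩ h
      linarith
    · rw [h]
    · have := hR c ⟨le_rfl, hcb.le⟩ x ⟨h.le, hx.2⟩ h
      linarith
  have h1 : c < f c := by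
    have := hL a ⟨le_rfl, hac.le⟩ c ⟨hac.le, le_rfl⟩ hac
    linarith
  have hc1I := hmap hcI
  have hc2I := hmap hc1I
  have h12 : f (f c) < f c := hx₀.1.trans hx₀.2
  have h2 : f (f c) < c := by
    by_contra hcon
    push Not at hcon
    have h3 := hR (f (f c)) ⟨hcon, hc2I.2⟩ (f c) ⟨h1.le, hc1I.2⟩ h12
    have h4 := hmax _ hc2I
    linarith
  have hit : ∀ n : ℕ, ContinuousOn (f^[n]) (Set.Icc a b) := fun n => hcont.iterate hmap n
  -- intervals inside the core
  have core : ∀ p q : ℝ, p < q → f (f c) ≤ p → q ≤ f c →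
      ∃ N : ℕ, ∀ n, N ≤ n → ∃ y ∈ Set.Icc p q, f^[n] y = x₀ := by
    intro p q hpq hp hq
    have hU : (Set.Ioo p q ∩ Set.Icc (f (f c)) (f c)).Nonempty :=
      ⟨(p + q) / 2, ⟨by linarith, by linarith⟩, by linarith, by linarith⟩
    obtain ⟨N1, hN1⟩ := hmix _ (Set.Iio x₀ ∩ Set.Icc (f (f c)) (f c)) ⟨_, isOpen_Ioo, rfl⟩
      ⟨_, isOpen_Iio, rfl⟩ hU ⟨f (f c), hx₀.1, le_rfl, h12.le⟩
    obtain ⟨N2, hN2⟩ := hmix _ (Set.Ioi x₀ ∩ Set.Icc (f (f c)) (f c)) ⟨_, isOpen_Ioo, rfl⟩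
      ⟨_, isOpen_Ioi, rfl⟩ hU ⟨f c, hx₀.2, h12.le, le_rfl⟩
    refine ⟨max N1 N2, fun n hn => ?_⟩
    obtain ⟨_, ⟨y1, hy1, rfl⟩, hz1⟩ := hN1 n (le_trans (le_max_left _ _) hn)
    obtain ⟨_, ⟨y2, hy2, rfl⟩, hz2⟩ := hN2 n (le_trans (le_max_right _ _) hn)
    have hsub : Set.Icc p q ⊆ Set.Icc a b :=
      Set.Icc_subset_Icc (hc2I.1.trans hp) (hq.trans hc1I.2)
    have := (isPreconnected_Icc (a := p) (b := q)).intermediate_value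
      (Set.Ioo_subset_Icc_self hy1.1) (Set.Ioo_subset_Icc_self hy2.1) ((hit n).mono hsub)
    exact this ⟨le_of_lt hz1.1, le_of_lt hz2.1⟩
  -- growth of intervals
  have grow : ∀ p q : ℝ, p < q → a ≤ p → q ≤ b →
      ∃ k : ℕ, ∃ p' q' : ℝ, p' < c ∧ c < q' ∧ Set.Icc p' q' ⊆ f^[k] '' Set.Icc p q := by
    intro p q hpq hp hq
    by_contra hcon
    obtain ⟨η1, hη1, H1⟩ := aux_unif f a c (q - p) (by linarith) hLc hL
    obtain ⟨η2, hη2, H2⟩ := aux_unif (fun x => - f x) c b (q - p) (by linarith) hRc.neg hR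
    set η := min η1 η2 with hη
    have hηpos : 0 < η := lt_min hη1 hη2
    have hηl : η ≤ η1 := min_le_left _ _
    have hηr : η ≤ η2 := min_le_right _ _
    have step : ∀ m : ℕ, ∃ p' q' : ℝ, a ≤ p' ∧ q' ≤ b ∧ q - p + m * η ≤ q' - p' ∧
        Set.Icc p' q' ⊆ f^[m] '' Set.Icc p q := by
      intro m
      induction m with
      | zero => exact ⟨p, q, hp, hq, by simp, by simp⟩
      | succ m ih =>
        obtain ⟨p', q', hp', hq', hlen, hsub⟩ := ih
        have hmη : 0 ≤ (m : ℝ) * η := by positivity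
        have hlt : p' < q' := by linarith
        have himg : f '' Set.Icc p' q' ⊆ f^[m + 1] '' Set.Icc p q := by
          rw [Function.iterate_succ', Set.image_comp]
          exact Set.image_mono hsub
        have hci : ContinuousOn f (Set.Icc p' q') := hcont.mono (Set.Icc_subset_Icc hp' hq')
        have hp'I : p' ∈ Set.Icc a b := ⟨hp', hlt.le.trans hq'⟩
        have hq'I : q' ∈ Set.Icc a b := ⟨hp'.trans hlt.le, hq'⟩
        push_cast
        by_cases hqc : q' ≤ c
        · have := H1 p' ⟨hp', hlt.le.trans hqc⟩ q' ⟨hp'.trans hlt.le, hqc⟩ (by linarith)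
          exact ⟨f p', f q', (hmap hp'I).1, (hmap hq'I).2, by linarith,
            (intermediate_value_Icc hlt.le hci).trans himg⟩
        · by_cases hpc : c ≤ p'
          · have := H2 p' ⟨hpc, hlt.le.trans hq'⟩ q' ⟨hpc.trans hlt.le, hq'⟩ (by linarith)
            exact ⟨f q', f p', (hmap hq'I).1, (hmap hp'I).2, by linarith,
              (intermediate_value_Icc' hlt.le hci).trans himg⟩
          · exact (hcon ⟨m, p', q', not_le.mp hpc, not_le.mp hqc, hsub⟩).elim
    obtain ⟨m, hm⟩ := exists_nat_gt ((b - a) / η)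
    rw [div_lt_iff₀ hηpos] at hm
    obtain ⟨p', q', hp', hq', hlen, -⟩ := step m
    linarith
  have key : ∀ p q : ℝ, p < q → a ≤ p → q ≤ b →
      ∃ N : ℕ, ∀ n, N ≤ n → ∃ y ∈ Set.Icc p q, f^[n] y = x₀ := by
    intro p q hpq hp hq
    obtain ⟨k, p', q', hp', hq', hsub⟩ := grow p q hpq hp hq
    obtain ⟨N, hN⟩ := core (max p' (f (f c))) (min q' (f c))
      ((max_lt hp' h2).trans (lt_min hq' h1)) (le_max_right _ _) (min_le_right _ _)
    refine ⟨N + k, fun n hn => ?_⟩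
    obtain ⟨z, hz, hzx⟩ := hN (n - k) (by omega)
    obtain ⟨y, hy, rfl⟩ := hsub ⟨(le_max_left _ _).trans hz.1, hz.2.trans (min_le_left _ _)⟩
    refine ⟨y, hy, ?_⟩
    rw [← Function.iterate_add_apply] at hzx
    rwa [Nat.sub_add_cancel (by omega)] at hzx
  have fin : ∃ N : ℕ, ∀ n, N ≤ n → ∀ x ∈ Set.Icc a b,
      ∃ y ∈ Set.Icc a b, f^[n] y = x₀ ∧ |x - y| ≤ ε := by
    refine (isCompact_Icc (a := a) (b := b)).induction_on
      (p := fun s => ∃ N : ℕ, ∀ n, N ≤ n → ∀ x ∈ s,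
        ∃ y ∈ Set.Icc a b, f^[n] y = x₀ ∧ |x - y| ≤ ε) ?_ ?_ ?_ ?_
    · exact ⟨0, fun n _ x hx => hx.elim⟩
    · rintro s t hst ⟨N, hN⟩
      exact ⟨N, fun n hn x hx => hN n hn x (hst hx)⟩
    · rintro s t ⟨N, hN⟩ ⟨M, hM⟩
      refine ⟨max N M, fun n hn x hx => ?_⟩
      rcases hx with hx | hx
      · exact hN n ((le_max_left _ _).trans hn) x hx
      · exact hM n ((le_max_right _ _).trans hn) x hx
    · intro x hx
      refine ⟨Metric.ball x (ε / 2), mem_nhdsWithin_of_mem_nhds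
        (Metric.ball_mem_nhds x (by linarith)), ?_⟩
      obtain ⟨N, hN⟩ := key (max a (x - ε / 2)) (min b (x + ε / 2))
        (max_lt (lt_min hab (by linarith [hx.1])) (lt_min (by linarith [hx.2]) (by linarith)))
        (le_max_left _ _) (min_le_left _ _)
      refine ⟨N, fun n hn z hz => ?_⟩
      obtain ⟨y, hy, hyx⟩ := hN n hn
      have hy1 := max_le_iff.mp hy.1
      have hy2 := le_min_iff.mp hy.2
      refine ⟨y, ⟨hy1.1, hy2.1⟩, hyx, ?_⟩
      rw [Metric.mem_ball, Real.dist_eq, abs_lt] at hz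
      rw [abs_le]
      constructor <;> linarith [hz.1, hz.2, hy1.2, hy2.2]
  obtain ⟨N, hN⟩ := fin
  exact ⟨N + 1, Nat.succ_pos N, hN (N + 1) (Nat.le_succ N)⟩
end

section
/- Let (E,d) be a metric space, T : E → E a continuous map, and γ ∈ E a point whose forward orbit (γ_k = T^k(γ))_{k≥0} is dense in E. Then a two-sided sequence (x_n)_{n∈ℤ} in E is a right limit of (γ_k)_{k≥0} if and only if it is a complete orbit of T, i.e., x_{n+1} = T(x_n) for all n ∈ ℤ. -/
open Filter Topology

/-- `b : ℤ → E` is a *right limit* of the sequence `a : ℕ → E`. -/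
def IsRightLimit {E : Type*} [TopologicalSpace E] (a : ℕ → E) (b : ℤ → E) : Prop :=
  ∃ k : ℕ → ℕ, StrictMono k ∧ (∀ j, 0 < k j) ∧
    ∀ n : ℤ, Tendsto (fun j => a (n + (k j : ℤ)).toNat) atTop (𝓝 (b n))

/-- If `T : E → E` is continuous on a metric space and `γ` has dense forward orbit, then the
right limits of `(T^k γ)_{k ≥ 0}` are exactly the complete orbits of `T`. -/
theorem stmt_2 {E : Type*} [MetricSpace E] (T : E → E) (hT : Continuous T) (γ : E)
    (hdense : Dense (Set.range fun k : ℕ => T^[k] γ)) (x : ℤ → E) :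
    IsRightLimit (fun k : ℕ => T^[k] γ) x ↔ ∀ n : ℤ, x (n + 1) = T (x n) := by
  have hstep : ∀ (x : ℤ → E), (∀ n : ℤ, x (n + 1) = T (x n)) →
      ∀ (i : ℕ) (n : ℤ), T^[i] (x n) = x (n + i) := by
    intro x hx i
    induction i with
    | zero => intro n; simp
    | succ i ih =>
      intro n
      rw [Function.iterate_succ_apply', ih, ← hx]
      congr 1
      push_cast
      ring
  constructor
  · rintro ⟨k, hk, -, hlim⟩ n
    refine tendsto_nhds_unique (hlim (n + 1)) ?_
    refine ((hT.tendsto (x n)).comp (hlim n)).congr' ?_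
    filter_upwards [eventually_ge_atTop n.natAbs] with j hj
    have h1 : j ≤ k j := hk.id_le j
    have h2 : (n + 1 + (k j : ℤ)).toNat = (n + (k j : ℤ)).toNat + 1 := by omega
    simp only [Function.comp_apply]
    rw [h2, Function.iterate_succ_apply']
  · intro hx
    have key : ∀ N : ℕ, ∃ᶠ k : ℕ in atTop, 0 < k ∧ ∀ n : ℤ, n.natAbs ≤ N →
        dist (T^[(n + (k : ℤ)).toNat] γ) (x n) < 1 / ((N : ℝ) + 1) := by
      intro N
      rw [frequently_atTop]
      intro K
      set M : ℕ := N + K + 1 with hM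
      have hev : ∀ᶠ y in 𝓝 (x (-(M : ℤ))), ∀ i ∈ Finset.range (M + N + 1),
          dist (T^[i] y) (x (-(M : ℤ) + i)) < 1 / ((N : ℝ) + 1) := by
        rw [eventually_all_finset]
        intro i _
        have h := (hT.iterate i).tendsto (x (-(M : ℤ)))
        rw [hstep x hx] at h
        exact h.eventually (Metric.ball_mem_nhds _ (by positivity))
      obtain ⟨y, ⟨m, rfl⟩, hy⟩ :=
        ((mem_closure_iff_frequently.1 (hdense (x (-(M : ℤ))))).and_eventually hev).exists
      refine ⟨m + M, by omega, by omega, ?_⟩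
      intro n hn
      have h := hy (n + M).toNat (by rw [Finset.mem_range]; omega)
      have h1 : (-(M : ℤ) + ((n + M).toNat : ℤ)) = n := by omega
      have h2 : (n + ((m + M : ℕ) : ℤ)).toNat = (n + M).toNat + m := by omega
      rw [h1] at h
      rw [h2, Function.iterate_add_apply]
      exact h
    obtain ⟨k, hk, hP⟩ := extraction_forall_of_frequently key
    refine ⟨k, hk, fun j => (hP j).1, fun n => ?_⟩
    rw [tendsto_iff_dist_tendsto_zero]
    refine squeeze_zero' (Eventually.of_forall fun _ => dist_nonneg) ?_
      (tendsto_one_div_add_atTop_nhds_zero_nat (𝕜 := ℝ))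
    filter_upwards [eventually_ge_atTop n.natAbs] with j hj
    exact ((hP j).2 n hj).le
end

section
/- Assume the postcritical orbit (c_k)_{k≥1} is dense in [c₂,c₁]. Then the right limits of the sequence (c_{k+1})_{k≥0} are exactly the complete orbits of f contained in [c₂,c₁]: a two-sided sequence (x_n)_{n∈ℤ} is a right limit of (c_{k+1})_{k≥0} if and only if x_n ∈ [c₂,c₁] and x_{n+1} = f(x_n) for all n ∈ ℤ. -/
open Filter Topology

/-- If the postcritical orbit is dense in `[c₂, c₁]`, the right limits of `(c_{k+1})_{k ≥ 0}`
are exactly the complete orbits of `f` contained in `[c₂, c₁]`. -/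
theorem stmt_4
    -- Setup: piecewise expanding unimodal map
    (f : ℝ → ℝ) (a b c : ℝ)
    (hab : a < b) (hc : c ∈ Set.Ioo a b)
    (hmap : Set.MapsTo f (Set.Icc a b) (Set.Icc a b))
    (hcont : ContinuousOn f (Set.Icc a b))
    (hfa : f a = a) (hfb : f b = a)
    (hC3L : ContDiffOn ℝ 3 f (Set.Icc a c))
    (hC3R : ContDiffOn ℝ 3 f (Set.Icc c b))
    (hd1 : ∀ x ∈ Set.Icc a c, 1 < derivWithin f (Set.Icc a c) x)
    (hd2 : ∀ x ∈ Set.Icc c b, derivWithin f (Set.Icc c b) x < -1)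
    (hnotper : ∀ n : ℕ, 1 ≤ n → f^[n] c ≠ c)
    (hinf : (Set.range fun k : ℕ => f^[k + 1] c).Infinite)
    (hmix : ∀ U V : Set ℝ,
      (∃ U₀, IsOpen U₀ ∧ U = U₀ ∩ Set.Icc (f^[2] c) (f^[1] c)) →
      (∃ V₀, IsOpen V₀ ∧ V = V₀ ∩ Set.Icc (f^[2] c) (f^[1] c)) →
      U.Nonempty → V.Nonempty → ∃ N : ℕ, ∀ n, N ≤ n → (f^[n] '' U ∩ V).Nonempty)
    -- density of the postcritical orbit in [c₂, c₁]
    (hdense : Set.Icc (f^[2] c) (f^[1] c) ⊆ closure (Set.range fun k : ℕ => f^[k + 1] c))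
    (x : ℤ → ℝ) :
    IsRightLimit (fun k : ℕ => f^[k + 1] c) x ↔
      ∀ n : ℤ, x n ∈ Set.Icc (f^[2] c) (f^[1] c) ∧ x (n + 1) = f (x n) := by
  have hIL : interior (Set.Icc a c) = Set.Ioo a c := interior_Icc
  have hL : MonotoneOn (fun y => f y - y) (Set.Icc a c) := by
    have hd : DifferentiableOn ℝ f (Set.Icc a c) := hC3L.differentiableOn (by norm_num)
    refine monotoneOn_of_deriv_nonneg (convex_Icc a c) (hC3L.continuousOn.sub continuousOn_id)
      ((hd.sub differentiableOn_id).mono interior_subset) ?_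
    intro y hy
    have hn : Set.Icc a c ∈ 𝓝 y := mem_interior_iff_mem_nhds.1 hy
    have h1 := hd1 y (interior_subset hy)
    rw [derivWithin_of_mem_nhds hn] at h1
    have hda : DifferentiableAt ℝ f y := (hd y (interior_subset hy)).differentiableAt hn
    have := (hda.hasDerivAt.sub (hasDerivAt_id y)).deriv
    have h3 : deriv (fun y => f y - y) y = deriv f y - 1 := this
    rw [h3]; linarith
  have hR : AntitoneOn f (Set.Icc c b) := by
    have hd : DifferentiableOn ℝ f (Set.Icc c b) := hC3R.differentiableOn (by norm_num)
    refine antitoneOn_of_deriv_nonpos (convex_Icc c b) hC3R.continuousOn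
      (hd.mono interior_subset) ?_
    intro y hy
    have hn : Set.Icc c b ∈ 𝓝 y := mem_interior_iff_mem_nhds.1 hy
    have h1 := hd2 y (interior_subset hy)
    rw [derivWithin_of_mem_nhds hn] at h1
    linarith
  have hge : ∀ y ∈ Set.Icc a c, y ≤ f y := by
    intro y hy
    have := hL ⟨le_refl a, hc.1.le⟩ hy hy.1
    simp only [hfa] at this
    linarith
  have hle : ∀ y ∈ Set.Icc a b, f y ≤ f c := by
    intro y hy
    rcases le_total y c with h | h
    · have := hL ⟨hy.1, h⟩ ⟨hc.1.le, le_refl c⟩ h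
      simp only at this
      linarith
    · exact hR ⟨le_refl c, hc.2.le⟩ ⟨h, hy.2⟩ h
  have hcI : c ∈ Set.Icc a b := ⟨hc.1.le, hc.2.le⟩
  have hc1I := hmap hcI
  have hc2I := hmap hc1I
  have hcc1 : c ≤ f c := hge c ⟨hc.1.le, le_refl c⟩
  have e1 : f^[1] c = f c := rfl
  have e2 : f^[2] c = f (f c) := rfl
  rw [e1, e2] at *
  have hJI : Set.Icc (f (f c)) (f c) ⊆ Set.Icc a b := Set.Icc_subset_Icc hc2I.1 hc1I.2
  have hJ : Set.MapsTo f (Set.Icc (f (f c)) (f c)) (Set.Icc (f (f c)) (f c)) := by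
    intro y hy
    refine ⟨?_, hle y (hJI hy)⟩
    rcases le_total y c with h | h
    · exact hy.1.trans (hge y ⟨(hJI hy).1, h⟩)
    · exact hR ⟨h, (hJI hy).2⟩ ⟨hcc1, hc1I.2⟩ hy.2
  have hfJ : ContinuousOn f (Set.Icc (f (f c)) (f c)) := hcont.mono hJI
  have horb : ∀ k : ℕ, f^[k+1] c ∈ Set.Icc (f (f c)) (f c) := by
    intro k
    induction k with
    | zero => exact ⟨hle _ hc1I, le_refl _⟩
    | succ k ih => rw [Function.iterate_succ_apply']; exact hJ ih
  have hlt : f (f c) < f c := by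
    rcases (hle _ hc1I).lt_or_eq with h | h
    · exact h
    · exfalso
      refine hinf ((Set.finite_singleton (f c)).subset ?_)
      rintro _ ⟨k, rfl⟩
      have := horb k
      rw [h, Set.Icc_self] at this
      exact this
  constructor
  · rintro ⟨k, hk, -, hlim⟩ n
    have hm : ∀ n, x n ∈ Set.Icc (f (f c)) (f c) := fun n =>
      isClosed_Icc.mem_of_tendsto (hlim n) (Eventually.of_forall fun j => horb _)
    refine ⟨hm n, ?_⟩
    have h1 : Tendsto (fun j => f (f^[(n + (k j : ℤ)).toNat + 1] c)) atTop (𝓝 (f (x n))) :=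
      (hfJ (x n) (hm n)).tendsto.comp
        (tendsto_nhdsWithin_iff.2 ⟨hlim n, Eventually.of_forall fun j => horb _⟩)
    refine tendsto_nhds_unique ((hlim (n+1)).congr' ?_) h1
    filter_upwards [eventually_ge_atTop n.natAbs] with j hj
    have := hk.id_le j
    simp only [id] at this
    have e : (n + 1 + (k j : ℤ)).toNat = (n + (k j : ℤ)).toNat + 1 := by omega
    rw [e, ← Function.iterate_succ_apply' f]
  · intro hx
    have hvisit : ∀ y ∈ Set.Icc (f (f c)) (f c), ∀ U : Set ℝ, IsOpen U → y ∈ U → ∀ K : ℕ,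
        ∃ m, K ≤ m ∧ f^[m+1] c ∈ U := by
      intro y hy U hU hyU K
      rw [← closure_Ioo hlt.ne] at hy
      have hne : (U ∩ Set.Ioo (f (f c)) (f c)).Nonempty := mem_closure_iff.1 hy U hU hyU
      have hop : IsOpen (U ∩ Set.Ioo (f (f c)) (f c)) := hU.inter isOpen_Ioo
      have hfin : ((fun k : ℕ => f^[k + 1] c) '' Set.Iio K).Finite := (Set.finite_Iio K).image _
      obtain ⟨z, hz⟩ := hne
      have hinfU : (U ∩ Set.Ioo (f (f c)) (f c)).Infinite :=
        infinite_of_mem_nhds z (hop.mem_nhds hz)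
      obtain ⟨w, hw, hw'⟩ := (hinfU.diff hfin).nonempty
      obtain ⟨_, hv, m, rfl⟩ := mem_closure_iff.1 (hdense (Set.Ioo_subset_Icc_self hw.2)) _
        (hop.sdiff hfin.isClosed) ⟨hw, hw'⟩
      refine ⟨m, ?_, hv.1.1⟩
      by_contra hlt'
      exact hv.2 ⟨m, not_le.1 hlt', rfl⟩
    have hxit : ∀ (n : ℤ) (i : ℕ), f^[i] (x n) = x (n + i) := by
      intro n i
      induction i with
      | zero => simp
      | succ i ih =>
        rw [Function.iterate_succ_apply', ih, ← (hx _).2]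
        congr 1; push_cast; ring
    have key : ∀ M : ℕ, ∃ᶠ k in atTop, M < k ∧ ∀ n : ℤ, n.natAbs ≤ M →
        |f^[(n + (k : ℤ)).toNat + 1] c - x n| < 1 / ((M : ℝ) + 1) := by
      intro M
      rw [frequently_atTop]
      intro K
      have hev : ∀ᶠ y in 𝓝[Set.Icc (f (f c)) (f c)] (x (-M)), ∀ i ∈ Finset.range (2 * M + 1),
          |f^[i] y - x (-M + i)| < 1 / ((M : ℝ) + 1) := by
        rw [Filter.eventually_all_finset]
        intro i _
        have h1 := (hfJ.iterate hJ i) (x (-M)) (hx _).1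
        have h2 := Metric.tendsto_nhds.1 h1.tendsto (1 / ((M : ℝ) + 1)) (by positivity)
        simpa only [Real.dist_eq, hxit] using h2
      rw [eventually_nhdsWithin_iff] at hev
      obtain ⟨U, hUs, hU, hxU⟩ := eventually_nhds_iff.1 hev |>.imp fun _ h => h
      obtain ⟨m, hm, hmU⟩ := hvisit _ (hx _).1 U hU hxU (K + 1)
      refine ⟨m + M, by omega, by omega, ?_⟩
      intro n hn
      have h3 := hUs _ hmU (horb m) (n + M).toNat (by rw [Finset.mem_range]; omega)
      have e1 : (-(M : ℤ) + ((n + M).toNat : ℤ)) = n := by omega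
      have e2 : (n + ((m + M : ℕ) : ℤ)).toNat + 1 = (n + M).toNat + (m + 1) := by omega
      rw [e1, ← Function.iterate_add_apply, ← e2] at h3
      exact h3
    obtain ⟨k, hk, hP⟩ := extraction_forall_of_frequently key
    refine ⟨k, hk, fun j => (Nat.zero_le j).trans_lt (hP j).1, fun n => ?_⟩
    rw [tendsto_iff_dist_tendsto_zero]
    refine squeeze_zero' (Eventually.of_forall fun j => dist_nonneg) ?_
      tendsto_one_div_add_atTop_nhds_zero_nat
    filter_upwards [eventually_ge_atTop n.natAbs] with j hj
    rw [Real.dist_eq]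
    exact ((hP j).2 n hj).le
end

section
/- Assume the postcritical orbit (c_k)_{k≥1} is dense in [c₂,c₁]. Let φ : I → ℂ be continuous and not f-symmetric on [c₂,c₁], i.e., there exist x, y ∈ [c₂,c₁] with f(x) = f(y) ∈ [c₂,c₁] and φ(x) ≠ φ(y). Then the set obtained from the renascent right limits of the sequence (φ(c_{k+1}))_{k≥0} by identifying two renascent right limits that differ at only finitely many indices is uncountable; equivalently, there exists an uncountable family of renascent right limits of (φ(c_{k+1}))_{k≥0} any two distinct members of which differ at infinitely many indices. -/
open Filter Topology

lemma aux_slope_left {f : ℝ → ℝ} {a c : ℝ} (hac : a < c)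
    (hC : ContDiffOn ℝ 3 f (Set.Icc a c))
    (hd : ∀ x ∈ Set.Icc a c, 1 < derivWithin f (Set.Icc a c) x) :
    c - a < f c - f a := by
  obtain ⟨x, hx, h⟩ := exists_hasDerivAt_eq_slope f (derivWithin f (Set.Icc a c)) hac
    hC.continuousOn (fun x hx => by
      have := (hC.differentiableOn (by norm_num) x (Set.Ioo_subset_Icc_self hx)).hasDerivWithinAt
      exact this.hasDerivAt (Icc_mem_nhds hx.1 hx.2))
  have h1 := hd x (Set.Ioo_subset_Icc_self hx)
  rw [h, lt_div_iff₀ (by linarith)] at h1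
  linarith

lemma aux_slope_right {f : ℝ → ℝ} {c b d : ℝ} (hcd : c < d) (hdb : d ≤ b)
    (hC : ContDiffOn ℝ 3 f (Set.Icc c b))
    (hd : ∀ x ∈ Set.Icc c b, derivWithin f (Set.Icc c b) x < -1) :
    f d - f c < -(d - c) := by
  obtain ⟨x, hx, h⟩ := exists_hasDerivAt_eq_slope f (derivWithin f (Set.Icc c b)) hcd
    (hC.continuousOn.mono (Set.Icc_subset_Icc_right hdb)) (fun x hx => by
      have := (hC.differentiableOn (by norm_num) x
        ⟨hx.1.le, hx.2.le.trans hdb⟩).hasDerivWithinAt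
      exact this.hasDerivAt (Icc_mem_nhds hx.1 (hx.2.trans_le hdb)))
  have h1 := hd x ⟨hx.1.le, hx.2.le.trans hdb⟩
  rw [h, div_lt_iff₀ (by linarith)] at h1
  linarith

lemma aux_iter_cont {f : ℝ → ℝ} {I : Set ℝ} (hmap : Set.MapsTo f I I)
    (hcont : ContinuousOn f I) (n : ℕ) : ContinuousOn (f^[n]) I := by
  induction n with
  | zero => exact continuousOn_id
  | succ n ih =>
    rw [Function.iterate_succ]
    exact ih.comp hcont hmap

/-- Density plus absence of isolated points: the orbit visits infinitely often. -/
lemma aux_frequently {y : ℕ → ℝ} {p q : ℝ}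
    (hd : Set.Icc p q ⊆ closure (Set.range fun k => y (k + 1))) {z : ℝ}
    (hz : z ∈ Set.Ioo p q) {V : Set ℝ} (hV : V ∈ 𝓝 z) : ∃ᶠ m in atTop, y m ∈ V := by
  rw [frequently_atTop]
  intro M
  have hO : IsOpen (interior V ∩ Set.Ioo p q) := isOpen_interior.inter isOpen_Ioo
  have hzO : z ∈ interior V ∩ Set.Ioo p q := ⟨mem_interior_iff_mem_nhds.2 hV, hz⟩
  have hinf : (interior V ∩ Set.Ioo p q).Infinite := infinite_of_mem_nhds z (hO.mem_nhds hzO)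
  have hfin : (y '' Set.Iio M).Finite := (Set.finite_Iio M).image y
  obtain ⟨w, hw, hwn⟩ := (hinf.sdiff hfin).nonempty
  have hO2 : IsOpen ((interior V ∩ Set.Ioo p q) \ (y '' Set.Iio M)) :=
    hO.sdiff hfin.isClosed
  obtain ⟨_, hv, k, rfl⟩ := mem_closure_iff.1 (hd (Set.Ioo_subset_Icc_self hw.2)) _ hO2 ⟨hw, hwn⟩
  refine ⟨k + 1, ?_, interior_subset hv.1.1⟩
  by_contra hlt
  exact hv.2 ⟨k + 1, not_le.1 hlt, rfl⟩

/-- Iterates of a nondegenerate interval eventually cover compact subintervals. -/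
lemma aux_cover {f : ℝ → ℝ} {I : Set ℝ} (hmap : Set.MapsTo f I I)
    (hcont : ContinuousOn f I) {α β : ℝ} (hJ : Set.Icc α β ⊆ I)
    (hmix : ∀ U V : Set ℝ,
      (∃ U₀, IsOpen U₀ ∧ U = U₀ ∩ Set.Icc α β) →
      (∃ V₀, IsOpen V₀ ∧ V = V₀ ∩ Set.Icc α β) →
      U.Nonempty → V.Nonempty → ∃ N : ℕ, ∀ n, N ≤ n → (f^[n] '' U ∩ V).Nonempty)
    {a₁ a₂ p q : ℝ} (ha : a₁ < a₂) (h1 : α < a₁) (h2 : a₂ < β) (hp : α < p) (hq : q < β) :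
    ∃ N : ℕ, ∀ n, N ≤ n → Set.Icc p q ⊆ f^[n] '' Set.Icc a₁ a₂ := by
  have hU : (Set.Ioo a₁ a₂ ∩ Set.Icc α β).Nonempty :=
    ⟨(a₁ + a₂) / 2, ⟨by linarith, by linarith⟩, by linarith, by linarith⟩
  obtain ⟨N₁, hN₁⟩ := hmix _ (Set.Iio p ∩ Set.Icc α β) ⟨_, isOpen_Ioo, rfl⟩ ⟨_, isOpen_Iio, rfl⟩ hU
    ⟨α, hp, le_rfl, by linarith⟩
  obtain ⟨N₂, hN₂⟩ := hmix _ (Set.Ioi q ∩ Set.Icc α β) ⟨_, isOpen_Ioo, rfl⟩ ⟨_, isOpen_Ioi, rfl⟩ hU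
    ⟨β, hq, by linarith, le_rfl⟩
  refine ⟨max N₁ N₂, fun n hn => ?_⟩
  obtain ⟨_, ⟨u, hu, rfl⟩, hu'⟩ := hN₁ n (le_trans (le_max_left _ _) hn)
  obtain ⟨_, ⟨v, hv, rfl⟩, hv'⟩ := hN₂ n (le_trans (le_max_right _ _) hn)
  have hsub : Set.uIcc u v ⊆ Set.Icc a₁ a₂ :=
    Set.uIcc_subset_Icc (Set.Ioo_subset_Icc_self hu.1) (Set.Ioo_subset_Icc_self hv.1)
  have hc : ContinuousOn (f^[n]) (Set.uIcc u v) :=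
    (aux_iter_cont hmap hcont n).mono fun x hx => hJ
      ⟨h1.le.trans (hsub hx).1, (hsub hx).2.trans h2.le⟩
  intro z hz
  have h3 : f^[n] u < p := hu'.1
  have h4 : q < f^[n] v := hv'.1
  obtain ⟨w, hw, hwz⟩ := intermediate_value_uIcc hc
    (Set.mem_uIcc.2 (Or.inl ⟨h3.le.trans hz.1, hz.2.trans h4.le⟩))
  exact ⟨w, hsub hw, hwz⟩

/-- The two-sided orbit through a backward sequence `u` with step `N`; `u k` sits at
index `-1 - k N`. -/
noncomputable def auxOrbit (f : ℝ → ℝ) (N : ℕ) (u : ℕ → ℝ) (n : ℤ) : ℝ :=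
  f^[(n + 1 + N * ((n.natAbs + 1 : ℕ) : ℤ)).toNat] (u (n.natAbs + 1))

lemma aux_back {f : ℝ → ℝ} {N : ℕ} {u : ℕ → ℝ} (hu : ∀ k, f^[N] (u (k + 1)) = u k) (k j : ℕ) :
    f^[N * j] (u (k + j)) = u k := by
  induction j with
  | zero => simp
  | succ j ih =>
    rw [Nat.mul_succ, Function.iterate_add_apply, ← add_assoc, hu, ih]

lemma aux_consistent {f : ℝ → ℝ} {N : ℕ} {u : ℕ → ℝ} (hu : ∀ k, f^[N] (u (k + 1)) = u k)
    {k k' m m' : ℕ} (h : (m : ℤ) - N * k = m' - N * k') : f^[m] (u k) = f^[m'] (u k') := by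
  wlog hk : k ≤ k' generalizing k k' m m'
  · exact (this h.symm (le_of_not_ge hk)).symm
  obtain ⟨j, rfl⟩ := Nat.exists_eq_add_of_le hk
  have : m' = m + N * j := by
    push_cast at h
    zify
    linarith
  rw [this, Function.iterate_add_apply, aux_back hu]

lemma aux_orbit_eq {f : ℝ → ℝ} {N : ℕ} (hN : 1 ≤ N) {u : ℕ → ℝ}
    (hu : ∀ k, f^[N] (u (k + 1)) = u k) {n : ℤ} {m k : ℕ} (h : (m : ℤ) = n + 1 + N * k) :
    auxOrbit f N u n = f^[m] (u k) := by
  unfold auxOrbit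
  apply aux_consistent hu
  have hpos : 0 ≤ n + 1 + N * ((n.natAbs + 1 : ℕ) : ℤ) := by
    have : (1 : ℤ) * ((n.natAbs + 1 : ℕ) : ℤ) ≤ N * ((n.natAbs + 1 : ℕ) : ℤ) := by
      gcongr
      exact_mod_cast hN
    omega
  rw [Int.toNat_of_nonneg hpos, h]
  ring

lemma aux_rightLimit {f : ℝ → ℝ} {I : Set ℝ} (hmap : Set.MapsTo f I I)
    (hcont : ContinuousOn f I) {c p q : ℝ} (hc : c ∈ I) (hI : Set.Icc p q ⊆ I)
    (hd : Set.Icc p q ⊆ closure (Set.range fun k : ℕ => f^[k + 1] c))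
    {N : ℕ} (hN : 1 ≤ N) {u : ℕ → ℝ} (hu : ∀ k, f^[N] (u (k + 1)) = u k)
    (hup : ∀ k, u k ∈ Set.Ioo p q) {φ : ℝ → ℂ} (hφ : ContinuousOn φ I) :
    IsRightLimit (fun k : ℕ => φ (f^[k + 1] c)) (fun n => φ (auxOrbit f N u n)) := by
  have key : ∀ j : ℕ, ∃ᶠ k in atTop, 0 < k ∧ N * j < k ∧ ∀ i < 2 * (N * j) + 1,
      dist (f^[i + (k - N * j)] c) (f^[i] (u j)) < 1 / ((j : ℝ) + 1) := by
    intro j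
    have hIn : I ∈ 𝓝 (u j) :=
      mem_of_superset (Icc_mem_nhds (hup j).1 (hup j).2) hI
    have hV : {z | ∀ i < 2 * (N * j) + 1, dist (f^[i] z) (f^[i] (u j)) < 1 / ((j : ℝ) + 1)}
        ∈ 𝓝 (u j) := by
      have : ∀ᶠ z in 𝓝 (u j), ∀ i ∈ Set.Iio (2 * (N * j) + 1),
          dist (f^[i] z) (f^[i] (u j)) < 1 / ((j : ℝ) + 1) := by
        rw [eventually_all_finite (Set.finite_Iio _)]
        intro i _
        have := (aux_iter_cont hmap hcont i).continuousAt hIn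
        exact this.eventually (Metric.ball_mem_nhds _ (by positivity))
      exact this
    have hfr := aux_frequently (y := fun m => f^[m] c) hd (hup j) hV
    rw [frequently_atTop] at hfr ⊢
    intro M
    obtain ⟨m, hm, hmV⟩ := hfr (M + 1)
    refine ⟨m + N * j, by omega, by omega, by omega, fun i hi => ?_⟩
    rw [Nat.add_sub_cancel, Function.iterate_add_apply]
    exact hmV i hi
  obtain ⟨k, hk, hP⟩ := extraction_forall_of_frequently key
  refine ⟨k, hk, fun j => (hP j).1, fun n => ?_⟩
  have hiter : ∀ m : ℕ, Set.MapsTo (f^[m]) I I := fun m => hmap.iterate m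
  have horb : auxOrbit f N u n ∈ I :=
    hiter _ (hI (Set.Ioo_subset_Icc_self (hup _)))
  have hlim : Tendsto (fun j => f^[(n + (k j : ℤ)).toNat + 1] c) atTop
      (𝓝 (auxOrbit f N u n)) := by
    rw [tendsto_iff_dist_tendsto_zero]
    refine squeeze_zero' (Eventually.of_forall fun _ => dist_nonneg) ?_
      tendsto_one_div_add_atTop_nhds_zero_nat
    filter_upwards [eventually_ge_atTop (n.natAbs + 1)] with j hj
    have hj2 : j ≤ N * j := Nat.le_mul_of_pos_left j hN
    have hnn : 0 ≤ n + 1 + ((N * j : ℕ) : ℤ) := by omega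
    obtain ⟨i, hi⟩ := Int.eq_ofNat_of_zero_le hnn
    have hkj := (hP j).2.1
    have h1 : (n + (k j : ℤ)).toNat + 1 = i + (k j - N * j) := by omega
    rw [h1, aux_orbit_eq hN hu (m := i) (k := j) (by rw [← hi]; push_cast; ring)]
    exact ((hP j).2.2 i (by omega)).le
  have := (hφ _ horb).tendsto.comp
    (tendsto_nhdsWithin_iff.2 ⟨hlim, Eventually.of_forall fun j => hiter _ hc⟩)
  exact this

/-- If the postcritical orbit is dense in `[c₂, c₁]` and `φ` is continuous and not
`f`-symmetric on `[c₂, c₁]`, then there is an uncountable family of renascent right limits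
of `(φ(c_{k+1}))_{k ≥ 0}`, any two distinct members of which differ at infinitely many
indices (so the quotient by "differ at finitely many indices" is uncountable). -/
theorem stmt_5
    -- Setup: piecewise expanding unimodal map
    (f : ℝ → ℝ) (a b c : ℝ)
    (hab : a < b) (hc : c ∈ Set.Ioo a b)
    (hmap : Set.MapsTo f (Set.Icc a b) (Set.Icc a b))
    (hcont : ContinuousOn f (Set.Icc a b))
    (hfa : f a = a) (hfb : f b = a)
    (hC3L : ContDiffOn ℝ 3 f (Set.Icc a c))
    (hC3R : ContDiffOn ℝ 3 f (Set.Icc c b))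
    (hd1 : ∀ x ∈ Set.Icc a c, 1 < derivWithin f (Set.Icc a c) x)
    (hd2 : ∀ x ∈ Set.Icc c b, derivWithin f (Set.Icc c b) x < -1)
    (hnotper : ∀ n : ℕ, 1 ≤ n → f^[n] c ≠ c)
    (hinf : (Set.range fun k : ℕ => f^[k + 1] c).Infinite)
    (hmix : ∀ U V : Set ℝ,
      (∃ U₀, IsOpen U₀ ∧ U = U₀ ∩ Set.Icc (f^[2] c) (f^[1] c)) →
      (∃ V₀, IsOpen V₀ ∧ V = V₀ ∩ Set.Icc (f^[2] c) (f^[1] c)) →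
      U.Nonempty → V.Nonempty → ∃ N : ℕ, ∀ n, N ≤ n → (f^[n] '' U ∩ V).Nonempty)
    -- density of the postcritical orbit in [c₂, c₁]
    (hdense : Set.Icc (f^[2] c) (f^[1] c) ⊆ closure (Set.range fun k : ℕ => f^[k + 1] c))
    -- the observable: continuous, not f-symmetric on [c₂, c₁]
    (φ : ℝ → ℂ) (hφ : ContinuousOn φ (Set.Icc a b))
    (hnotsym : ∃ x ∈ Set.Icc (f^[2] c) (f^[1] c), ∃ y ∈ Set.Icc (f^[2] c) (f^[1] c),
      f x = f y ∧ f x ∈ Set.Icc (f^[2] c) (f^[1] c) ∧ φ x ≠ φ y) :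
    ∃ B : Set (ℤ → ℂ), ¬ B.Countable ∧
      (∀ bb ∈ B, IsRightLimit (fun k : ℕ => φ (f^[k + 1] c)) bb ∧
        ∀ n : ℕ, bb (n : ℤ) = φ (f^[n + 1] c)) ∧
      (∀ bb₁ ∈ B, ∀ bb₂ ∈ B, bb₁ ≠ bb₂ → {n : ℤ | bb₁ n ≠ bb₂ n}.Infinite) := by
  have hcI : c ∈ Set.Icc a b := Set.Ioo_subset_Icc_self hc
  have hc1I : f^[1] c ∈ Set.Icc a b := hmap.iterate 1 hcI
  have hc2I : f^[2] c ∈ Set.Icc a b := hmap.iterate 2 hcI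
  have hJ : Set.Icc (f^[2] c) (f^[1] c) ⊆ Set.Icc a b :=
    Set.Icc_subset_Icc hc2I.1 hc1I.2
  have hcc1 : c < f^[1] c := by
    have := aux_slope_left hc.1 hC3L hd1
    simp only [Function.iterate_one]
    linarith
  have hc2c : f^[2] c < c := by
    have := aux_slope_right hcc1 hc1I.2 hC3R hd2
    simp only [Function.iterate_succ, Function.iterate_zero, Function.comp, id] at this ⊢
    linarith
  clear hC3L hC3R hd1 hd2 hfa hfb hinf hnotper
  set α := f^[2] c
  set β := f^[1] c
  have hαβ : α < β := hc2c.trans hcc1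
  obtain ⟨x, hx, y, hy, -, -, hxy⟩ := hnotsym
  -- move to interior points
  have hint : ∀ z ∈ Set.Icc α β, ∀ V ∈ 𝓝 (φ z), ∃ w ∈ Set.Ioo α β, φ w ∈ V := by
    intro z hz V hV
    have h1 : ContinuousWithinAt φ (Set.Ioo α β) z :=
      (hφ z (hJ hz)).mono (Set.Ioo_subset_Icc_self.trans hJ)
    have : (𝓝[Set.Ioo α β] z).NeBot := by
      rw [← mem_closure_iff_nhdsWithin_neBot, closure_Ioo hαβ.ne]
      exact hz
    obtain ⟨w, hw, hwV⟩ := ((eventually_mem_nhdsWithin).and (h1.eventually hV)).exists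
    exact ⟨w, hw, hwV⟩
  obtain ⟨V₁, V₂, hV₁o, hV₂o, hxV, hyV, hdisj⟩ := t2_separation hxy
  obtain ⟨x', hx', hx'V⟩ := hint x hx V₁ (hV₁o.mem_nhds hxV)
  obtain ⟨y', hy', hy'V⟩ := hint y hy V₂ (hV₂o.mem_nhds hyV)
  have hball : ∀ z ∈ Set.Ioo α β, ∀ V, IsOpen V → φ z ∈ V →
      ∃ a₁ a₂, a₁ < a₂ ∧ α < a₁ ∧ a₂ < β ∧ ∀ w ∈ Set.Icc a₁ a₂, φ w ∈ V := by
    intro z hz V hVo hzV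
    have hIn : Set.Ioo α β ∈ 𝓝 z := Ioo_mem_nhds hz.1 hz.2
    have h1 : ContinuousAt φ z :=
      hφ.continuousAt (mem_of_superset hIn (Set.Ioo_subset_Icc_self.trans hJ))
    obtain ⟨r, hr, hrs⟩ := Metric.nhds_basis_closedBall.mem_iff.1
      (inter_mem hIn (h1 (hVo.mem_nhds hzV)))
    rw [Real.closedBall_eq_Icc] at hrs
    refine ⟨z - r, z + r, by linarith, ?_, ?_, fun w hw => (hrs hw).2⟩
    · exact (hrs (Set.left_mem_Icc.2 (by linarith))).1.1
    · exact (hrs (Set.right_mem_Icc.2 (by linarith))).1.2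
  obtain ⟨a₁, a₂, ha, hαa, haβ, hA⟩ := hball x' hx' V₁ hV₁o hx'V
  obtain ⟨b₁, b₂, hb, hαb, hbβ, hB⟩ := hball y' hy' V₂ hV₂o hy'V
  set p := min c (min a₁ b₁) with hp
  set q := max c (max a₂ b₂) with hq
  have hαp : α < p := lt_min hc2c (lt_min hαa hαb)
  have hqβ : q < β := max_lt hcc1 (max_lt haβ hbβ)
  obtain ⟨N₁, hN₁⟩ := aux_cover hmap hcont hJ hmix ha hαa haβ hαp hqβ
  obtain ⟨N₂, hN₂⟩ := aux_cover hmap hcont hJ hmix hb hαb hbβ hαp hqβ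
  obtain ⟨N, hN, hNA, hNB⟩ : ∃ N, 1 ≤ N ∧ Set.Icc p q ⊆ f^[N] '' Set.Icc a₁ a₂ ∧
      Set.Icc p q ⊆ f^[N] '' Set.Icc b₁ b₂ :=
    ⟨N₁ + N₂ + 1, by omega, hN₁ _ (by omega), hN₂ _ (by omega)⟩
  let W : Bool → Set ℝ := fun s => if s then Set.Icc a₁ a₂ else Set.Icc b₁ b₂
  have hWpq : ∀ s, W s ⊆ Set.Icc p q := by
    intro s
    cases s
    · exact Set.Icc_subset_Icc ((min_le_right _ _).trans (min_le_right _ _))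
        ((le_max_right _ _).trans (le_max_right _ _))
    · exact Set.Icc_subset_Icc ((min_le_right _ _).trans (min_le_left _ _))
        ((le_max_left _ _).trans (le_max_right _ _))
  have hWne : ∀ s s', s ≠ s' → ∀ z ∈ W s, ∀ w ∈ W s', φ z ≠ φ w := by
    intro s s' hss z hz w hw
    cases s <;> cases s'
    · exact absurd rfl hss
    · exact fun h => Set.disjoint_left.1 hdisj (hA w hw) (h ▸ hB z hz)
    · exact fun h => Set.disjoint_left.1 hdisj (hA z hz) (h ▸ hB w hw)
    · exact absurd rfl hss
  have hg : ∀ (s : Bool) (z : ℝ), ∃ w, z ∈ Set.Icc p q → w ∈ W s ∧ f^[N] w = z := by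
    intro s z
    by_cases hz : z ∈ Set.Icc p q
    · cases s
      · obtain ⟨w, hw, h⟩ := hNB hz
        exact ⟨w, fun _ => ⟨hw, h⟩⟩
      · obtain ⟨w, hw, h⟩ := hNA hz
        exact ⟨w, fun _ => ⟨hw, h⟩⟩
    · exact ⟨0, fun h => absurd h hz⟩
  choose g hg using hg
  let u : (ℕ → Bool) → ℕ → ℝ := fun t k =>
    Nat.rec c (fun k z => g (t (Nat.unpair k).1) z) k
  have hu0 : ∀ t, u t 0 = c := fun t => rfl
  have hus : ∀ t k, u t (k + 1) = g (t (Nat.unpair k).1) (u t k) := fun t k => rfl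
  have hupq : ∀ t k, u t k ∈ Set.Icc p q := by
    intro t k
    induction k with
    | zero => exact ⟨min_le_left _ _, le_max_left _ _⟩
    | succ k ih => rw [hus]; exact hWpq _ (hg _ _ ih).1
  have huN : ∀ t k, f^[N] (u t (k + 1)) = u t k := fun t k => by
    rw [hus]; exact (hg _ _ (hupq t k)).2
  have huW : ∀ t k, u t (k + 1) ∈ W (t (Nat.unpair k).1) := fun t k => by
    rw [hus]; exact (hg _ _ (hupq t k)).1
  let F : (ℕ → Bool) → ℤ → ℂ := fun t n => φ (auxOrbit f N (u t) n)
  have hdiff : ∀ t t', t ≠ t' → {n : ℤ | F t n ≠ F t' n}.Infinite := by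
    intro t t' htt
    obtain ⟨i, hi⟩ := Function.ne_iff.1 htt
    refine Set.infinite_of_injective_forall_mem
      (f := fun j : ℕ => (-1 - N * ((Nat.pair i j + 1 : ℕ) : ℤ) : ℤ)) ?_ ?_
    · intro j j' h
      have hN0 : (N : ℤ) ≠ 0 := by exact_mod_cast (by omega : N ≠ 0)
      have h1 : (N : ℤ) * ((Nat.pair i j + 1 : ℕ) : ℤ) = N * ((Nat.pair i j' + 1 : ℕ) : ℤ) := by
        simp only at h
        linarith
      have h2 := mul_left_cancel₀ hN0 h1
      have h3 : Nat.pair i j = Nat.pair i j' := by omega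
      exact (Nat.pair_eq_pair.1 h3).2
    · intro j
      have e : ∀ t, auxOrbit f N (u t) (-1 - N * ((Nat.pair i j + 1 : ℕ) : ℤ))
          = u t (Nat.pair i j + 1) := fun t =>
        aux_orbit_eq hN (huN t) (m := 0) (k := Nat.pair i j + 1) (by push_cast; ring)
      change φ _ ≠ φ _
      rw [e, e]
      have h1 := huW t (Nat.pair i j)
      have h2 := huW t' (Nat.pair i j)
      rw [Nat.unpair_pair] at h1 h2
      exact hWne _ _ hi _ h1 _ h2
  have hinj : Function.Injective F := by
    intro t t' h
    by_contra hne
    apply hdiff t t' hne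
    simp [h]
  refine ⟨Set.range F, ?_, ?_, ?_⟩
  · intro hcount
    have hc1 : Countable (Set.range F) := hcount.to_subtype
    have hc2 : Countable (ℕ → Bool) := (Set.rangeFactorization_injective.2 hinj).countable
    obtain ⟨e, he⟩ := exists_surjective_nat (ℕ → Bool)
    obtain ⟨k, hk⟩ := he (fun n => !(e n n))
    have := congrFun hk k
    simp at this
  · rintro _ ⟨t, rfl⟩
    refine ⟨aux_rightLimit hmap hcont hcI hJ hdense hN (huN t)
      (fun k => ⟨hαp.trans_le (hupq t k).1, (hupq t k).2.trans_lt hqβ⟩) hφ, fun n => ?_⟩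
    change φ _ = _
    rw [aux_orbit_eq hN (huN t) (m := n + 1) (k := 0) (by push_cast; ring), hu0]
  · rintro _ ⟨t, rfl⟩ _ ⟨t', rfl⟩ hne
    exact hdiff t t' fun h => hne (by rw [h])
end

section
/- Assume the postcritical orbit (c_k)_{k≥1} is dense in [c₂,c₁]. Then the set of precritical orbits of f — sequences (y_n)_{n≤−1} with y_n ∈ [c₂,c₁] for all n ≤ −1, f(y_{n−1}) = y_n for all n ≤ −1, and y_{−1} = c — is uncountable. -/
open Filter Topology

theorem exists_backward_orbit (f : ℝ → ℝ) (l r : ℝ)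
    (hsurj : ∀ z ∈ Set.Icc l r, ∃ x ∈ Set.Icc l r, f x = z) (z : ℝ) (hz : z ∈ Set.Icc l r) :
    ∃ w : ℕ → ℝ, (∀ j, w j ∈ Set.Icc l r) ∧ w 0 = z ∧ ∀ j, f (w (j + 1)) = w j := by
  choose! g hg hfg using hsurj
  have hmem : ∀ j, g^[j] z ∈ Set.Icc l r := by
    intro j
    induction j with
    | zero => simpa using hz
    | succ k ih => rw [Function.iterate_succ_apply']; exact hg _ ih
  refine ⟨fun j => g^[j] z, hmem, rfl, fun j => ?_⟩
  simp only [Function.iterate_succ_apply']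
  exact hfg _ (hmem j)

theorem backward_uncountable (f : ℝ → ℝ) (l r c : ℝ) (hf : ContinuousOn f (Set.Icc l r))
    (hc : c ∈ Set.Icc l r)
    (hsurj : ∀ z ∈ Set.Icc l r, ∃ x ∈ Set.Icc l r, f x = z)
    (hbr : ∀ y : ℕ → ℝ, (∀ j, y j ∈ Set.Icc l r) → y 0 = c → (∀ j, f (y (j + 1)) = y j) →
      ∀ n, ∃ m, n ≤ m ∧ ∃ x ∈ Set.Icc l r, x ≠ y (m + 1) ∧ f x = y m) :
    ¬ Set.Countable {y : ℕ → ℝ | (∀ j, y j ∈ Set.Icc l r) ∧ y 0 = c ∧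
        ∀ j, f (y (j + 1)) = y j} := by
  set S := {y : ℕ → ℝ | (∀ j, y j ∈ Set.Icc l r) ∧ y 0 = c ∧ ∀ j, f (y (j + 1)) = y j} with hS
  have hlr : l ≤ r := hc.1.trans hc.2
  have hne : S.Nonempty := exists_backward_orbit f l r hsurj c hc
  have hclosed : IsClosed S := by
    obtain ⟨g, hg, hgf⟩ : ∃ g : ℝ → ℝ, Continuous g ∧ ∀ x ∈ Set.Icc l r, g x = f x := by
      refine ⟨Set.IccExtend hlr ((Set.Icc l r).restrict f), ?_, ?_⟩
      · exact (continuousOn_iff_continuous_restrict.1 hf).Icc_extend'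
      · intro x hx
        rw [Set.IccExtend_of_mem _ _ hx]; rfl
    have : S = (⋂ j, {y : ℕ → ℝ | y j ∈ Set.Icc l r}) ∩ ({y : ℕ → ℝ | y 0 = c} ∩
        ⋂ j, {y : ℕ → ℝ | g (y (j + 1)) = y j}) := by
      ext y
      simp only [hS, Set.mem_setOf_eq, Set.mem_inter_iff, Set.mem_iInter]
      constructor
      · rintro ⟨h1, h2, h3⟩
        exact ⟨h1, h2, fun j => by rw [hgf _ (h1 _)]; exact h3 j⟩
      · rintro ⟨h1, h2, h3⟩
        exact ⟨h1, h2, fun j => by rw [← hgf _ (h1 _)]; exact h3 j⟩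
    rw [this]
    refine (isClosed_iInter fun j => isClosed_Icc.preimage (continuous_apply j)).inter
      ((isClosed_eq (continuous_apply 0) continuous_const).inter
        (isClosed_iInter fun j => isClosed_eq (hg.comp (continuous_apply _)) (continuous_apply _)))
  have hperf : Preperfect S := by
    intro y hy
    obtain ⟨h1, h2, h3⟩ := hy
    have key : ∀ n : ℕ, ∃ w : ℕ → ℝ, (w ≠ y ∧ w ∈ S) ∧ ∀ j ≤ n, w j = y j := by
      intro n
      obtain ⟨m, hnm, x, hx, hxne, hfx⟩ := hbr y h1 h2 h3 n
      obtain ⟨v, v1, v2, v3⟩ := exists_backward_orbit f l r hsurj x hx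
      refine ⟨fun j => if j ≤ m then y j else v (j - (m + 1)), ⟨?_, ?_, ?_, ?_⟩, ?_⟩
      · intro h
        have := congrFun h (m + 1)
        simp [v2] at this
        exact hxne this
      · intro j
        dsimp only
        split_ifs
        · exact h1 j
        · exact v1 _
      · simpa using h2
      · intro j
        dsimp only
        rcases lt_trichotomy j m with h | h | h
        · rw [if_pos (by omega), if_pos (by omega)]; exact h3 j
        · subst h
          rw [if_neg (by omega), if_pos le_rfl]
          simpa [v2] using hfx
        · rw [if_neg (by omega), if_neg (by omega),
            show j + 1 - (m + 1) = (j - (m + 1)) + 1 by omega]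
          exact v3 _
      · intro j hj
        simp [hj.trans hnm]
    choose w hw hwy using key
    rw [accPt_iff_frequently]
    have ht : Tendsto w atTop (𝓝 y) := by
      rw [tendsto_pi_nhds]
      intro j
      apply tendsto_const_nhds.congr'
      filter_upwards [eventually_ge_atTop j] with n hn
      exact (hwy n j hn).symm
    exact ht.frequently (Frequently.of_forall hw)
  letI := TopologicalSpace.upgradeIsCompletelyMetrizable (ℕ → ℝ)
  obtain ⟨F, hF, -, hinj⟩ := Perfect.exists_nat_bool_injection ⟨hclosed, hperf⟩ hne
  intro hcount
  have h1 : (Set.range F).Countable := hcount.mono hF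
  have h2 : Countable (ℕ → Bool) := by
    have := h1.to_subtype
    exact (Set.rangeFactorization_injective.2 hinj).countable
  have h3 : Cardinal.mk (ℕ → Bool) ≤ Cardinal.aleph0 := Cardinal.mk_le_aleph0_iff.2 h2
  rw [← Cardinal.power_def, Cardinal.mk_bool, Cardinal.mk_nat] at h3
  exact absurd h3 (not_le.2 (Cardinal.cantor _))

/-- If the postcritical orbit is dense in `[c₂, c₁]`, the set of precritical orbits of `f`
is uncountable.  A precritical orbit `(y_n)_{n ≤ -1}` is encoded as `y : ℕ → ℝ` via
`y j = y_{-1-j}`: thus `y 0 = y_{-1} = c`, `f (y (j+1)) = y j` (i.e. `f (y_{n-1}) = y_n`),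
and every `y j` lies in `[c₂, c₁]`. -/
theorem stmt_6
    -- Setup: piecewise expanding unimodal map
    (f : ℝ → ℝ) (a b c : ℝ)
    (hab : a < b) (hc : c ∈ Set.Ioo a b)
    (hmap : Set.MapsTo f (Set.Icc a b) (Set.Icc a b))
    (hcont : ContinuousOn f (Set.Icc a b))
    (hfa : f a = a) (hfb : f b = a)
    (hC3L : ContDiffOn ℝ 3 f (Set.Icc a c))
    (hC3R : ContDiffOn ℝ 3 f (Set.Icc c b))
    (hd1 : ∀ x ∈ Set.Icc a c, 1 < derivWithin f (Set.Icc a c) x)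
    (hd2 : ∀ x ∈ Set.Icc c b, derivWithin f (Set.Icc c b) x < -1)
    (hnotper : ∀ n : ℕ, 1 ≤ n → f^[n] c ≠ c)
    (hinf : (Set.range fun k : ℕ => f^[k + 1] c).Infinite)
    (hmix : ∀ U V : Set ℝ,
      (∃ U₀, IsOpen U₀ ∧ U = U₀ ∩ Set.Icc (f^[2] c) (f^[1] c)) →
      (∃ V₀, IsOpen V₀ ∧ V = V₀ ∩ Set.Icc (f^[2] c) (f^[1] c)) →
      U.Nonempty → V.Nonempty → ∃ N : ℕ, ∀ n, N ≤ n → (f^[n] '' U ∩ V).Nonempty)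
    -- density of the postcritical orbit in [c₂, c₁]
    (hdense : Set.Icc (f^[2] c) (f^[1] c) ⊆ closure (Set.range fun k : ℕ => f^[k + 1] c)) :
    ¬ Set.Countable {y : ℕ → ℝ | (∀ j, y j ∈ Set.Icc (f^[2] c) (f^[1] c)) ∧ y 0 = c ∧
        ∀ j, f (y (j + 1)) = y j} := by
  obtain ⟨hac, hcb⟩ := hc
  have eL : ∀ x ∈ Set.Icc a c, ∀ y ∈ Set.Icc a c, x < y → y - x < f y - f x := by
    have := Convex.mul_sub_lt_image_sub_of_lt_deriv (convex_Icc a c) hC3L.continuousOn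
      ((hC3L.differentiableOn (by norm_num)).mono interior_subset) (C := 1) (by
        intro x hx
        rw [← derivWithin_of_mem_nhds (mem_interior_iff_mem_nhds.1 hx)]
        exact hd1 x (interior_subset hx))
    intro x hx y hy h
    have := this x hx y hy h
    linarith
  have eR : ∀ x ∈ Set.Icc c b, ∀ y ∈ Set.Icc c b, x < y → f y - f x < -(y - x) := by
    have := Convex.image_sub_lt_mul_sub_of_deriv_lt (convex_Icc c b) hC3R.continuousOn
      ((hC3R.differentiableOn (by norm_num)).mono interior_subset) (C := -1) (by
        intro x hx
        rw [← derivWithin_of_mem_nhds (mem_interior_iff_mem_nhds.1 hx)]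
        exact hd2 x (interior_subset hx))
    intro x hx y hy h
    have := this x hx y hy h
    linarith
  have i2 : f^[2] c = f (f c) := rfl
  have i1 : f^[1] c = f c := rfl
  rw [i2, i1] at *
  have hc1b : f c ≤ b := (hmap ⟨hac.le, hcb.le⟩).2
  have hcc1 : c < f c := by
    have := eL a ⟨le_rfl, hac.le⟩ c ⟨hac.le, le_rfl⟩ hac
    linarith
  have hac2 : a ≤ f (f c) := (hmap ⟨by linarith, hc1b⟩).1
  have hmax : ∀ x ∈ Set.Icc a b, x ≠ c → f x < f c := by
    intro x hx hne
    rcases lt_or_gt_of_ne hne with h | h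
    · have := eL x ⟨hx.1, h.le⟩ c ⟨hac.le, le_rfl⟩ h
      linarith
    · have := eR c ⟨le_rfl, hcb.le⟩ x ⟨h.le, hx.2⟩ h
      linarith
  have hc2c1 : f (f c) < f c := hmax _ ⟨by linarith, hc1b⟩ hcc1.ne'
  have hc2c : f (f c) < c := by
    by_contra! h
    have h1 := eR (f (f c)) ⟨h, by linarith⟩ (f c) ⟨hcc1.le, hc1b⟩ hc2c1
    have hne : f (f c) ≠ c := hnotper 2 (by norm_num)
    have := hmax (f (f c)) ⟨hac2, by linarith⟩ hne
    linarith
  have mono : ∀ x ∈ Set.Icc a c, ∀ y ∈ Set.Icc a c, x ≤ y → f x ≤ f y := by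
    intro x hx y hy h
    rcases h.eq_or_lt with h | h
    · rw [h]
    · have := eL x hx y hy h
      linarith
  have anti : ∀ x ∈ Set.Icc c b, ∀ y ∈ Set.Icc c b, x ≤ y → f y ≤ f x := by
    intro x hx y hy h
    rcases h.eq_or_lt with h | h
    · rw [h]
    · have := eR x hx y hy h
      linarith
  have hmaxle : ∀ x ∈ Set.Icc a b, f x ≤ f c := by
    intro x hx
    by_cases h : x = c
    · rw [h]
    · exact (hmax x hx h).le
  -- the fixed point
  obtain ⟨p, hp, hfp⟩ : ∃ p ∈ Set.Icc c (f c), f p = p := by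
    have hcn : ContinuousOn (fun x => f x - x) (Set.Icc c (f c)) :=
      (hcont.mono (Set.Icc_subset_Icc hac.le hc1b)).sub continuousOn_id
    obtain ⟨p, hp, h⟩ := intermediate_value_Icc' hcc1.le hcn
      (show (0 : ℝ) ∈ _ from ⟨by linarith, by linarith⟩)
    exact ⟨p, hp, by simpa [sub_eq_zero] using h⟩
  have hcp : c < p := by
    rcases hp.1.eq_or_lt with h | h
    · rw [← h] at hfp; linarith
    · exact h
  have hc3p : f (f (f c)) ≤ p := by
    by_contra! hlt
    have m1 : ∀ x ∈ Set.Icc (f (f c)) p, f x ∈ Set.Icc p (f c) := by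
      intro x hx
      refine ⟨?_, hmaxle x ⟨by linarith [hx.1], by linarith [hx.2, hp.2]⟩⟩
      rcases le_total x c with h | h
      · have := mono _ ⟨hac2, hc2c.le⟩ x ⟨by linarith [hx.1], h⟩ hx.1
        linarith
      · have := anti x ⟨h, by linarith [hx.2, hp.2]⟩ p ⟨hcp.le, by linarith [hp.2]⟩ hx.2
        linarith
    have m2 : ∀ x ∈ Set.Icc p (f c), f x ∈ Set.Icc (f (f c)) p := by
      intro x hx
      have h1 := anti p ⟨hcp.le, by linarith [hp.2]⟩ x
        ⟨by linarith [hx.1], by linarith [hx.2]⟩ hx.1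
      have h2 := anti x ⟨by linarith [hx.1], by linarith [hx.2]⟩ (f c) ⟨hcc1.le, hc1b⟩ hx.2
      exact ⟨h2, by linarith⟩
    have m3 : ∀ k : ℕ, ∀ x ∈ Set.Icc (f (f c)) p, f^[2 * k] x ∈ Set.Icc (f (f c)) p := by
      intro k
      induction k with
      | zero => intro x hx; simpa using hx
      | succ k ih =>
        intro x hx
        rw [show 2 * (k + 1) = (2 * k + 1) + 1 by ring, Function.iterate_succ_apply',
          Function.iterate_succ_apply']
        exact m2 _ (m1 _ (ih x hx))
    obtain ⟨N, hN⟩ := hmix (Set.Iio p ∩ Set.Icc (f (f c)) (f c))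
      (Set.Iio p ∩ Set.Icc (f (f c)) (f c)) ⟨_, isOpen_Iio, rfl⟩ ⟨_, isOpen_Iio, rfl⟩
      ⟨c, hcp, hc2c.le, hcc1.le⟩ ⟨c, hcp, hc2c.le, hcc1.le⟩
    obtain ⟨z, ⟨x, hx, rfl⟩, hz⟩ := hN (2 * N + 1) (by omega)
    rw [Function.iterate_succ_apply'] at hz
    have h1 := m1 _ (m3 N x ⟨hx.2.1, le_of_lt hx.1⟩)
    have h2 := hz.1
    simp only [Set.mem_Iio] at h2
    linarith [h1.1]
  have preR : ∀ z ∈ Set.Icc (f (f c)) (f c), ∃ x ∈ Set.Icc c (f c), f x = z := fun z hz =>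
    intermediate_value_Icc' hcc1.le (hcont.mono (Set.Icc_subset_Icc hac.le hc1b)) hz
  have preL : ∀ z ∈ Set.Icc (f (f (f c))) (f c), ∃ x ∈ Set.Icc (f (f c)) c, f x = z := fun z hz =>
    intermediate_value_Icc hc2c.le (hcont.mono (Set.Icc_subset_Icc hac2 hcb.le)) hz
  refine backward_uncountable f _ _ c (hcont.mono (Set.Icc_subset_Icc hac2 hc1b))
    ⟨hc2c.le, hcc1.le⟩ ?_ ?_
  · intro z hz
    obtain ⟨x, hx, h⟩ := preR z hz
    exact ⟨x, ⟨by linarith [hx.1], hx.2⟩, h⟩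
  · intro y h1 h2 h3 n
    by_contra! hcon
    have hit : ∀ m, f^[m] (y m) = c := by
      intro m
      induction m with
      | zero => simpa using h2
      | succ k ih => rw [Function.iterate_succ_apply, h3, ih]
    have hnc : ∀ m, y (m + 1) ≠ c := by
      intro m h
      have := hit (m + 1)
      rw [h] at this
      exact hnotper (m + 1) (by omega) this
    have huniq : ∀ m, n ≤ m → ∀ x ∈ Set.Icc (f (f c)) (f c), f x = y m → x = y (m + 1) := by
      intro m hm x hx hfx
      by_contra hne
      exact hcon m hm x hx hne hfx
    have hR : ∀ m, n ≤ m → c ≤ y (m + 1) := by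
      intro m hm
      obtain ⟨x, hx, h⟩ := preR (y m) (h1 m)
      rw [← huniq m hm x ⟨by linarith [hx.1], hx.2⟩ h]
      exact hx.1
    have hlt : ∀ m, n ≤ m → y m < f (f (f c)) := by
      intro m hm
      by_contra! hge
      obtain ⟨x, hx, h⟩ := preL (y m) ⟨hge, (h1 m).2⟩
      have h4 := huniq m hm x ⟨hx.1, by linarith [hx.2]⟩ h
      exact hnc m (le_antisymm (h4 ▸ hx.2) (hR m hm))
    have q1 := hlt n le_rfl
    have q2 := hlt (n + 1) (by omega)
    have q3 := hR n le_rfl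
    have q4 := anti (y (n + 1)) ⟨q3, by linarith [(h1 (n + 1)).2]⟩ p
      ⟨hcp.le, by linarith [hp.2]⟩ (by linarith)
    rw [h3, hfp] at q4
    linarith
end

section
/- Let X be a compact metric space, T : X → X continuous, and μ a T-invariant Borel probability measure which is mixing: for all continuous φ, ψ : X → ℂ, ∫ (φ∘T^n)·ψ dμ → (∫ φ dμ)(∫ ψ dμ) as n → ∞. Let c ∈ X be Birkhoff typical: for every continuous φ : X → ℂ, (1/n) Σ_{k=0}^{n−1} φ(T^k(c)) → ∫ φ dμ as n → ∞. Then c is Wiener–Wintner typical: for every continuous φ : X → ℂ and every ω ∈ (0, 2π), (1/n) Σ_{k=0}^{n−1} e^{iωk} φ(T^k(c)) → 0 as n → ∞. -/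
open Filter Topology MeasureTheory

/-- Twisted sums of a function along an orbit. -/
noncomputable def twSum {X : Type*} (T : X → X) (z : ℂ) (φ : X → ℂ) (H : ℕ) (x : X) : ℂ :=
  ∑ h ∈ Finset.range H, z ^ h * φ (T^[h] x)

lemma twSum_succ {X : Type*} (T : X → X) (z : ℂ) (φ : X → ℂ) (H : ℕ) (x : X) :
    twSum T z φ (H + 1) x = z * twSum T z φ H (T x) + φ x := by
  unfold twSum
  rw [Finset.sum_range_succ', Finset.mul_sum]
  simp only [pow_zero, one_mul, Function.iterate_zero, id, Function.iterate_succ_apply]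
  congr 1
  refine Finset.sum_congr rfl fun k _ => ?_
  ring

lemma twSum_cont {X : Type*} [TopologicalSpace X] {T : X → X} (hT : Continuous T) (z : ℂ)
    {φ : X → ℂ} (hφ : Continuous φ) (H : ℕ) : Continuous (twSum T z φ H) := by
  unfold twSum
  refine continuous_finsetSum _ fun h _ => ?_
  exact continuous_const.mul (hφ.comp (hT.iterate h))

lemma int_cont {X : Type*} [MetricSpace X] [CompactSpace X]
    [MeasurableSpace X] [BorelSpace X] (μ : Measure X) [IsProbabilityMeasure μ]
    {E : Type*} [NormedAddCommGroup E] [SecondCountableTopology E]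
    {f : X → E} (hf : Continuous f) : Integrable f μ :=
  hf.integrable_of_hasCompactSupport (HasCompactSupport.of_compactSpace f)

lemma shift_bound (u : ℕ → ℂ) (M : ℝ) (hu : ∀ k, ‖u k‖ ≤ M) (n h : ℕ) :
    ‖∑ k ∈ Finset.range n, u (k + h) - ∑ k ∈ Finset.range n, u k‖ ≤ h * (2 * M) := by
  induction h with
  | zero => simp
  | succ h ih =>
    have e : ∑ k ∈ Finset.range n, u (k + (h + 1)) - ∑ k ∈ Finset.range n, u (k + h)
        = u (n + h) - u h := by
      rw [← Finset.sum_sub_distrib]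
      have := Finset.sum_range_sub (fun k => u (k + h)) n
      simp only [zero_add] at this
      rw [← this]
      refine Finset.sum_congr rfl fun k _ => ?_
      rw [show k + (h + 1) = k + 1 + h by ring]
    have e2 : ∑ k ∈ Finset.range n, u (k + (h + 1)) - ∑ k ∈ Finset.range n, u k
        = (u (n + h) - u h) + (∑ k ∈ Finset.range n, u (k + h) - ∑ k ∈ Finset.range n, u k) := by
      rw [← e]; ring
    rw [e2]
    refine (norm_add_le _ _).trans ?_
    have := norm_sub_le (u (n + h)) (u h)
    have h1 := hu (n + h)
    have h2 := hu h
    push_cast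
    linarith

/-- The quadratic bound from invariance. -/
lemma quad_bound {X : Type*} [MetricSpace X] [CompactSpace X]
    [MeasurableSpace X] [BorelSpace X]
    (T : X → X) (hT : Continuous T)
    (μ : Measure X) [IsProbabilityMeasure μ]
    (hmp : MeasurePreserving T μ μ) (z : ℂ) (hz : ‖z‖ = 1) (φ : X → ℂ) (hφ : Continuous φ)
    (H : ℕ) :
    ∫ x, ‖twSum T z φ H x‖ ^ 2 ∂μ ≤ H * (2 * ∑ d ∈ Finset.range H,
      ‖∫ x, φ (T^[d] x) * (starRingEnd ℂ) (φ x) ∂μ‖) := by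
  set a : ℕ → ℂ := fun d => ∫ x, φ (T^[d] x) * (starRingEnd ℂ) (φ x) ∂μ with ha
  induction H with
  | zero => simp [twSum]
  | succ H ih =>
    have hP := twSum_cont hT z hφ H
    have key : ∀ x, ‖twSum T z φ (H + 1) x‖ ^ 2 = ‖twSum T z φ H (T x)‖ ^ 2 + (‖φ x‖ ^ 2
        + 2 * (z * twSum T z φ H (T x) * (starRingEnd ℂ) (φ x)).re) := by
      intro x
      rw [twSum_succ]
      have : ‖z * twSum T z φ H (T x)‖ ^ 2 = ‖twSum T z φ H (T x)‖ ^ 2 := by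
        rw [norm_mul, hz, one_mul]
      rw [← this]
      rw [← Complex.normSq_eq_norm_sq, ← Complex.normSq_eq_norm_sq, ← Complex.normSq_eq_norm_sq,
        Complex.normSq_add]
      ring
    have hc : Continuous fun x => z * twSum T z φ H (T x) * (starRingEnd ℂ) (φ x) :=
      (continuous_const.mul (hP.comp hT)).mul (Complex.continuous_conj.comp hφ)
    have hinvar : ∫ x, ‖twSum T z φ H (T x)‖ ^ 2 ∂μ = ∫ x, ‖twSum T z φ H x‖ ^ 2 ∂μ := by
      have hf : AEStronglyMeasurable (fun x => ‖twSum T z φ H x‖ ^ 2) (μ.map T) :=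
        (hP.norm.pow 2).aestronglyMeasurable
      have := integral_map hmp.measurable.aemeasurable hf
      rw [hmp.map_eq] at this
      exact this.symm
    have hsq : ∫ x, ‖φ x‖ ^ 2 ∂μ ≤ ‖a 0‖ := by
      have : a 0 = ((∫ x, ‖φ x‖ ^ 2 ∂μ : ℝ) : ℂ) := by
        rw [ha, ← integral_complex_ofReal]
        refine integral_congr_ae (ae_of_all _ fun x => ?_)
        simp [Complex.mul_conj, Complex.normSq_eq_norm_sq]
      rw [this, Complex.norm_real]
      exact le_abs_self _
    have hcross : ∫ x, z * twSum T z φ H (T x) * (starRingEnd ℂ) (φ x) ∂μ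
        = ∑ h ∈ Finset.range H, z ^ (h + 1) * a (h + 1) := by
      have : ∀ x, z * twSum T z φ H (T x) * (starRingEnd ℂ) (φ x)
          = ∑ h ∈ Finset.range H, z ^ (h + 1) * (φ (T^[h + 1] x) * (starRingEnd ℂ) (φ x)) := by
        intro x
        simp only [twSum, Finset.mul_sum, Finset.sum_mul, Function.iterate_succ_apply]
        refine Finset.sum_congr rfl fun k _ => ?_
        ring
      simp_rw [this]
      rw [integral_finsetSum]
      · refine Finset.sum_congr rfl fun k _ => ?_
        rw [integral_const_mul]
      · intro h _
        exact int_cont μ (continuous_const.mul ((hφ.comp (hT.iterate (h + 1))).mul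
          (Complex.continuous_conj.comp hφ)))
    have hre : ∫ x, (z * twSum T z φ H (T x) * (starRingEnd ℂ) (φ x)).re ∂μ
        ≤ ∑ h ∈ Finset.range H, ‖a (h + 1)‖ := by
      have h1 : ∫ x, (z * twSum T z φ H (T x) * (starRingEnd ℂ) (φ x)).re ∂μ
          = (∫ x, z * twSum T z φ H (T x) * (starRingEnd ℂ) (φ x) ∂μ).re :=
        integral_re (int_cont μ hc)
      rw [h1, hcross]
      refine (Complex.re_le_norm _).trans ((norm_sum_le _ _).trans ?_)
      refine Finset.sum_le_sum fun k _ => ?_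
      rw [norm_mul, norm_pow, hz, one_pow, one_mul]
    have hI : ∫ x, ‖twSum T z φ (H + 1) x‖ ^ 2 ∂μ = ∫ x, ‖twSum T z φ H (T x)‖ ^ 2 ∂μ
        + (∫ x, ‖φ x‖ ^ 2 ∂μ
        + 2 * ∫ x, (z * twSum T z φ H (T x) * (starRingEnd ℂ) (φ x)).re ∂μ) := by
      simp_rw [key]
      have i1 : Integrable (fun x => ‖twSum T z φ H (T x)‖ ^ 2) μ :=
        int_cont μ ((hP.comp hT).norm.pow 2)
      have i2 : Integrable (fun x => ‖φ x‖ ^ 2) μ := int_cont μ (hφ.norm.pow 2)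
      have i3 : Integrable (fun x => 2 *
          (z * twSum T z φ H (T x) * (starRingEnd ℂ) (φ x)).re) μ :=
        int_cont μ (continuous_const.mul (Complex.continuous_re.comp hc))
      have i23 : Integrable (fun x => ‖φ x‖ ^ 2 + 2 *
          (z * twSum T z φ H (T x) * (starRingEnd ℂ) (φ x)).re) μ := i2.add i3
      rw [integral_add i1 i23, integral_add i2 i3, integral_const_mul]
    have s1 : ∑ d ∈ Finset.range (H + 1), ‖a d‖ = ∑ h ∈ Finset.range H, ‖a (h + 1)‖ + ‖a 0‖ :=
      Finset.sum_range_succ' _ _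
    have s2 : ∑ d ∈ Finset.range H, ‖a d‖ ≤ ∑ d ∈ Finset.range (H + 1), ‖a d‖ := by
      rw [Finset.sum_range_succ]
      linarith [norm_nonneg (a H)]
    have s3 : (H : ℝ) * (2 * ∑ d ∈ Finset.range H, ‖a d‖)
        ≤ H * (2 * ∑ d ∈ Finset.range (H + 1), ‖a d‖) := by gcongr
    have s4 := norm_nonneg (a 0)
    rw [hI, hinvar]
    push_cast
    change _ ≤ ((H : ℝ) + 1) * (2 * ∑ d ∈ Finset.range (H + 1), ‖a d‖)
    linarith

/-- Orbit comparison with the locally averaged function. -/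
lemma orbit_bound {X : Type*} (T : X → X) (z : ℂ) (hz : ‖z‖ = 1) (φ : X → ℂ) (M : ℝ)
    (hM : ∀ x, ‖φ x‖ ≤ M) (c : X) (H n : ℕ) :
    H * ‖twSum T z φ n c‖ ≤ ∑ k ∈ Finset.range n, ‖twSum T z φ H (T^[k] c)‖
      + H * (H * (2 * M)) := by
  set u : ℕ → ℂ := fun k => z ^ k * φ (T^[k] c) with hu
  have hub : ∀ k, ‖u k‖ ≤ M := by
    intro k
    rw [hu]
    simpa [hz] using hM (T^[k] c)
  have hM0 : 0 ≤ M := (norm_nonneg _).trans (hM c)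
  have e1 : ∑ k ∈ Finset.range n, z ^ k * twSum T z φ H (T^[k] c)
      = ∑ h ∈ Finset.range H, ∑ k ∈ Finset.range n, u (k + h) := by
    rw [Finset.sum_comm]
    refine Finset.sum_congr rfl fun k _ => ?_
    rw [twSum, Finset.mul_sum]
    refine Finset.sum_congr rfl fun h _ => ?_
    rw [hu]
    simp only
    rw [← Function.iterate_add_apply, add_comm h k, pow_add]
    ring
  have e2 : (H : ℂ) * twSum T z φ n c = ∑ k ∈ Finset.range n, z ^ k * twSum T z φ H (T^[k] c)
      - ∑ h ∈ Finset.range H, (∑ k ∈ Finset.range n, u (k + h) - ∑ k ∈ Finset.range n, u k) := by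
    rw [e1, Finset.sum_sub_distrib]
    simp [twSum, hu]
  have e3 : H * ‖twSum T z φ n c‖ = ‖(H : ℂ) * twSum T z φ n c‖ := by simp
  rw [e3, e2]
  refine (norm_sub_le _ _).trans (add_le_add ?_ ?_)
  · refine (norm_sum_le _ _).trans (Finset.sum_le_sum fun k _ => ?_)
    rw [norm_mul, norm_pow, hz, one_pow, one_mul]
  · refine (norm_sum_le _ _).trans ?_
    refine (Finset.sum_le_card_nsmul _ _ (H * (2 * M)) fun h hh => ?_).trans ?_
    · refine (shift_bound u M hub n h).trans ?_
      have : (h : ℝ) ≤ H := by exact_mod_cast (Finset.mem_range.1 hh).le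
      gcongr
    · simp

lemma mean_zero_case {X : Type*} [MetricSpace X] [CompactSpace X]
    [MeasurableSpace X] [BorelSpace X]
    (T : X → X) (hT : Continuous T)
    (μ : Measure X) [IsProbabilityMeasure μ]
    (hmp : MeasurePreserving T μ μ)
    (hmix : ∀ φ ψ : X → ℂ, Continuous φ → Continuous ψ →
      Tendsto (fun n : ℕ => ∫ x, φ (T^[n] x) * ψ x ∂μ) atTop
        (𝓝 ((∫ x, φ x ∂μ) * ∫ x, ψ x ∂μ)))
    (c : X)
    (hBirk : ∀ φ : X → ℂ, Continuous φ →
      Tendsto (fun n : ℕ => (n : ℂ)⁻¹ * ∑ k ∈ Finset.range n, φ (T^[k] c)) atTop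
        (𝓝 (∫ x, φ x ∂μ)))
    (z : ℂ) (hz : ‖z‖ = 1) (φ : X → ℂ) (hφ : Continuous φ) (h0 : ∫ x, φ x ∂μ = 0) :
    Tendsto (fun n : ℕ => (n : ℂ)⁻¹ * twSum T z φ n c) atTop (𝓝 0) := by
  obtain ⟨M, hM⟩ : ∃ M, ∀ x, ‖φ x‖ ≤ M := by
    obtain ⟨M, hM⟩ := (isCompact_univ (X := X)).exists_bound_of_continuousOn hφ.continuousOn
    exact ⟨M, fun x => hM x (Set.mem_univ x)⟩
  have hcor := (hmix φ (fun x => (starRingEnd ℂ) (φ x)) hφ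
    (Complex.continuous_conj.comp hφ)).norm
  rw [h0, zero_mul, norm_zero] at hcor
  have hces := hcor.cesaro
  rw [Metric.tendsto_atTop]
  intro ε hε
  set δ := ε / 4 with hδ
  have hδ0 : 0 < δ := by positivity
  obtain ⟨H, hH1, hH2⟩ := ((hces.eventually (gt_mem_nhds
    (show (0 : ℝ) < δ ^ 2 / 2 by positivity))).and (eventually_gt_atTop 0)).exists
  have hHr : (0 : ℝ) < H := by exact_mod_cast hH2
  have hP := twSum_cont hT z hφ H
  have hq := quad_bound T hT μ hmp z hz φ hφ H
  have hq2 : ∫ x, ‖twSum T z φ H x‖ ^ 2 ∂μ ≤ H ^ 2 * δ ^ 2 := by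
    refine hq.trans ?_
    rw [inv_mul_lt_iff₀ hHr] at hH1
    nlinarith
  have hL1 : ∫ x, ‖twSum T z φ H x‖ ∂μ ≤ H * δ := by
    have : ∫ x, ‖twSum T z φ H x‖ ∂μ
        ≤ ∫ x, (H * δ / 2 + (2 * (H * δ))⁻¹ * ‖twSum T z φ H x‖ ^ 2) ∂μ := by
      refine integral_mono (int_cont μ hP.norm)
        (int_cont μ (continuous_const.add (continuous_const.mul (hP.norm.pow 2)))) fun x => ?_
      have hp : 0 < H * δ := by positivity
      simp only
      have : H * δ / 2 + (2 * (H * δ))⁻¹ * ‖twSum T z φ H x‖ ^ 2 - ‖twSum T z φ H x‖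
          = (2 * (H * δ))⁻¹ * (H * δ - ‖twSum T z φ H x‖) ^ 2 := by
        field_simp
        ring
      have h3 : 0 ≤ (2 * (H * δ))⁻¹ * (H * δ - ‖twSum T z φ H x‖) ^ 2 := by positivity
      linarith
    refine this.trans ?_
    have j2 : Integrable (fun x => (2 * (H * δ))⁻¹ * ‖twSum T z φ H x‖ ^ 2) μ :=
      int_cont μ (continuous_const.mul (hP.norm.pow 2))
    rw [integral_add (integrable_const _) j2,
      integral_const_mul]
    simp only [integral_const, probReal_univ, one_smul]
    have h4 : (2 * (H * δ))⁻¹ * ∫ x, ‖twSum T z φ H x‖ ^ 2 ∂μ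
        ≤ (2 * (H * δ))⁻¹ * (H ^ 2 * δ ^ 2) := by gcongr
    have h5 : (2 * (H * δ))⁻¹ * (H ^ 2 * δ ^ 2) = H * δ / 2 := by
      field_simp
    linarith
  have hB : Tendsto (fun n : ℕ => (n : ℝ)⁻¹ * ∑ k ∈ Finset.range n, ‖twSum T z φ H (T^[k] c)‖)
      atTop (𝓝 (∫ x, ‖twSum T z φ H x‖ ∂μ)) := by
    have := hBirk (fun x => ((‖twSum T z φ H x‖ : ℝ) : ℂ)) (Complex.continuous_ofReal.comp hP.norm)
    rw [integral_complex_ofReal] at this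
    have h6 := (Complex.continuous_re.tendsto _).comp this
    rw [Complex.ofReal_re] at h6
    refine h6.congr fun n => ?_
    simp only [Function.comp]
    rw [← Complex.ofReal_sum, ← Complex.ofReal_natCast, ← Complex.ofReal_inv,
      ← Complex.ofReal_mul, Complex.ofReal_re]
  have hE : Tendsto (fun n : ℕ => (n : ℝ)⁻¹ * (H * (H * (2 * M)))) atTop (𝓝 0) := by
    simpa using (tendsto_inv_atTop_nhds_zero_nat (𝕜 := ℝ)).mul_const (H * (H * (2 * M)) : ℝ)
  have hev := (hB.add hE).eventually (gt_mem_nhds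
    (show (∫ x, ‖twSum T z φ H x‖ ∂μ) + 0 < H * ε by
      have : (H : ℝ) * δ < H * ε := by
        have : δ < ε := by rw [hδ]; linarith
        gcongr
      linarith))
  obtain ⟨N, hN⟩ := eventually_atTop.1 hev
  refine ⟨N, fun n hn => ?_⟩
  have h7 := hN n hn
  rw [dist_zero_right, norm_mul, norm_inv, Complex.norm_natCast]
  have h8 := mul_le_mul_of_nonneg_left (orbit_bound T z hz φ M hM c H n)
    (show (0 : ℝ) ≤ (n : ℝ)⁻¹ by positivity)
  have h9 : (H : ℝ) * ((n : ℝ)⁻¹ * ‖twSum T z φ n c‖) < H * ε := by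
    linarith
  exact lt_of_mul_lt_mul_left h9 hHr.le

/-- Birkhoff typicality implies Wiener–Wintner typicality: if `(T, μ)` is mixing on a
compact metric space and every Birkhoff average of continuous functions along the orbit of
`c` converges to the space average, then for every continuous `φ` and `ω ∈ (0, 2π)` the
rotated averages `(1/n) Σ_{k<n} e^{iωk} φ(T^k c)` tend to `0`. -/
theorem stmt_17 {X : Type*} [MetricSpace X] [CompactSpace X]
    [MeasurableSpace X] [BorelSpace X]
    (T : X → X) (hT : Continuous T)
    (μ : Measure X) [IsProbabilityMeasure μ]
    (hinv : ∀ A : Set X, MeasurableSet A → μ (T ⁻¹' A) = μ A)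
    (hmix : ∀ φ ψ : X → ℂ, Continuous φ → Continuous ψ →
      Tendsto (fun n : ℕ => ∫ x, φ (T^[n] x) * ψ x ∂μ) atTop
        (𝓝 ((∫ x, φ x ∂μ) * ∫ x, ψ x ∂μ)))
    (c : X)
    (hBirk : ∀ φ : X → ℂ, Continuous φ →
      Tendsto (fun n : ℕ => (n : ℂ)⁻¹ * ∑ k ∈ Finset.range n, φ (T^[k] c)) atTop
        (𝓝 (∫ x, φ x ∂μ))) :
    ∀ φ : X → ℂ, Continuous φ → ∀ ω : ℝ, 0 < ω → ω < 2 * Real.pi →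
      Tendsto (fun n : ℕ =>
          (n : ℂ)⁻¹ * ∑ k ∈ Finset.range n,
            Complex.exp ((ω : ℂ) * (k : ℂ) * Complex.I) * φ (T^[k] c)) atTop (𝓝 0) := by
  intro φ hφ ω hω0 hω1
  set z : ℂ := Complex.exp ((ω : ℂ) * Complex.I) with hzdef
  have hz : ‖z‖ = 1 := Complex.norm_exp_ofReal_mul_I ω
  have hz1 : z ≠ 1 := by
    intro h
    rw [hzdef, Complex.exp_eq_one_iff] at h
    obtain ⟨n, hn⟩ := h
    have h2 : (ω : ℂ) = ((n * (2 * Real.pi) : ℝ) : ℂ) := by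
      apply mul_right_cancel₀ Complex.I_ne_zero
      rw [hn]
      push_cast
      ring
    have h3 : ω = n * (2 * Real.pi) := by exact_mod_cast h2
    have hpi := Real.two_pi_pos
    have n0 : (0 : ℝ) < n := by
      by_contra hc
      push Not at hc
      nlinarith
    have n1 : (n : ℝ) < 1 := by
      by_contra hc
      push Not at hc
      nlinarith
    have n0' : 0 < n := by exact_mod_cast n0
    have n1' : n < 1 := by exact_mod_cast n1
    omega
  have hmp : MeasurePreserving T μ μ := by
    refine ⟨hT.measurable, ?_⟩
    ext A hA
    rw [Measure.map_apply hT.measurable hA, hinv A hA]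
  set m : ℂ := ∫ x, φ x ∂μ with hm
  have hφ0 : Continuous fun x => φ x - m := hφ.sub continuous_const
  have hmean : ∫ x, (φ x - m) ∂μ = 0 := by
    rw [integral_sub (int_cont μ hφ) (integrable_const _)]
    simp [hm]
  have hmain := mean_zero_case T hT μ hmp hmix c hBirk z hz _ hφ0 hmean
  have hgeo : Tendsto (fun n : ℕ => (n : ℂ)⁻¹ * (m * ∑ k ∈ Finset.range n, z ^ k)) atTop (𝓝 0) := by
    refine squeeze_zero_norm (a := fun n : ℕ => (n : ℝ)⁻¹ * (‖m‖ * (2 / ‖z - 1‖))) ?_ ?_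
    · intro n
      rw [norm_mul, norm_inv, Complex.norm_natCast, norm_mul, geom_sum_eq hz1, norm_div]
      have : ‖z ^ n - 1‖ ≤ 2 := by
        refine (norm_sub_le _ _).trans ?_
        rw [norm_pow, hz]
        norm_num
      gcongr
    · simpa using (tendsto_inv_atTop_nhds_zero_nat (𝕜 := ℝ)).mul_const (‖m‖ * (2 / ‖z - 1‖))
  have hsum := hmain.add hgeo
  rw [add_zero] at hsum
  refine hsum.congr fun n => ?_
  rw [← mul_add, twSum, Finset.mul_sum, ← Finset.sum_add_distrib]
  congr 1
  refine Finset.sum_congr rfl fun k _ => ?_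
  have : Complex.exp ((ω : ℂ) * (k : ℂ) * Complex.I) = z ^ k := by
    rw [hzdef, ← Complex.exp_nat_mul]
    congr 1
    ring
  rw [this]
  ring
end

section
/- Let (a_k)_{k≥0} be a sequence of complex numbers that is eventually periodic: there exist integers m ≥ 0 and p ≥ 1 with a_{k+p} = a_k for all k ≥ m. If (a_k)_{k≥0} admits a renascent right limit, then (a_k)_{k≥0} is periodic, i.e., a_{k+p} = a_k for all k ≥ 0; and in that case the unique renascent right limit of (a_k)_{k≥0} is the p-periodic extension of (a_k)_{k≥0} to ℤ. -/
open Filter Topology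

/-- If an eventually `p`-periodic sequence of complex numbers admits a renascent right
limit, then it is `p`-periodic, and its unique renascent right limit is its `p`-periodic
extension to `ℤ`. -/
theorem stmt_18 (a : ℕ → ℂ) (m p : ℕ) (hp : 1 ≤ p)
    (hper : ∀ k, m ≤ k → a (k + p) = a k)
    (hex : ∃ bb : ℤ → ℂ, IsRightLimit a bb ∧ ∀ n : ℕ, bb (n : ℤ) = a n) :
    (∀ k, a (k + p) = a k) ∧
      ∀ bb : ℤ → ℂ, IsRightLimit a bb → (∀ n : ℕ, bb (n : ℤ) = a n) →
        bb = fun n : ℤ => a (n % (p : ℤ)).toNat := by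
  have key : ∀ bb : ℤ → ℂ, IsRightLimit a bb → Function.Periodic bb (p : ℤ) := by
    rintro bb ⟨k, hk, -, hlim⟩ n
    refine tendsto_nhds_unique_of_eventuallyEq (hlim (n + p)) (hlim n) ?_
    filter_upwards [eventually_ge_atTop (m + n.natAbs)] with j hj
    have h1 : j ≤ k j := hk.id_le j
    have h2 : (n + (p : ℤ) + (k j : ℤ)).toNat = (n + (k j : ℤ)).toNat + p := by omega
    rw [h2]
    exact hper _ (by omega)
  constructor
  · obtain ⟨bb, hb, hr⟩ := hex
    intro k
    have h := key bb hb (k : ℤ)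
    rw [← hr k, ← h, ← hr (k + p)]
    push_cast
    rfl
  · intro bb hb hr
    funext n
    have h0 : 0 ≤ n % (p : ℤ) := Int.emod_nonneg _ (by omega)
    have h := (key bb hb).int_mul (n / (p : ℤ)) (n % (p : ℤ))
    rw [← hr, Int.toNat_of_nonneg h0, ← h]
    congr 1
    have h3 := Int.emod_add_mul_ediv n (p : ℤ)
    simp only [Int.cast_id]
    linarith
end

section
/- Let θ be an irrational real number and define a_k = {kθ} − 1/2 for k ≥ 0, where {·} denotes the fractional part. Then: (i) the two-sided sequence b⁻ defined by b⁻_n = {nθ} − 1/2 for n ∈ ℤ is a renascent right limit of (a_k)_{k≥0}, and it is the only renascent right limit of (a_k)_{k≥0}; (ii) the two-sided sequence b⁺ defined by b⁺_0 = 1/2 and b⁺_n = {nθ} − 1/2 for n ∈ ℤ \ {0} is also a right limit of (a_k)_{k≥0}. -/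
open Filter Topology

lemma freq_fract (θ : ℝ) (hθ : Irrational θ) {x y : ℝ} (hx : 0 ≤ x) (hxy : x < y) (hy : y ≤ 1) :
    ∃ᶠ k : ℕ in atTop, x < Int.fract ((k : ℝ) * θ) ∧ Int.fract ((k : ℝ) * θ) < y := by
  have hd : DenseRange (· • (θ : AddCircle (1 : ℝ)) : ℤ → AddCircle (1 : ℝ)) := by
    rw [AddCircle.denseRange_zsmul_coe_iff]; simpa using hθ
  have hc : MapClusterPt (((x + y) / 2 : ℝ) : AddCircle (1 : ℝ)) atTop
      (· • (θ : AddCircle (1 : ℝ)) : ℕ → AddCircle (1 : ℝ)) :=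
    ((mapClusterPt_atTop_nsmul_tfae _ _).out 0 3).2 (hd _)
  have hU : IsOpen ((fun z : ℝ => (z : AddCircle (1 : ℝ))) '' Set.Ioo x y) :=
    QuotientAddGroup.isOpenMap_coe _ isOpen_Ioo
  have hm : (((x + y) / 2 : ℝ) : AddCircle (1 : ℝ)) ∈
      ((fun z : ℝ => (z : AddCircle (1 : ℝ))) '' Set.Ioo x y) :=
    ⟨_, ⟨by linarith, by linarith⟩, rfl⟩
  refine (hc.frequently (hU.mem_nhds hm)).mono ?_
  rintro k ⟨z, ⟨hz1, hz2⟩, hz⟩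
  have hz' : ((z : ℝ) : AddCircle (1 : ℝ)) = ((k * θ : ℝ) : AddCircle (1 : ℝ)) := by
    rw [← nsmul_eq_mul]; exact hz
  obtain ⟨m, hm⟩ := AddSubgroup.mem_zmultiples_iff.1 (QuotientAddGroup.eq.1 hz')
  have hf : Int.fract ((k : ℝ) * θ) = z := by
    rw [Int.fract_eq_iff]
    refine ⟨by linarith, by linarith, m, ?_⟩
    simp at hm
    linarith
  rw [hf]
  exact ⟨hz1, hz2⟩

lemma lim_aux (θ : ℝ) (k : ℕ → ℕ) (hk : StrictMono k) (e : ℕ → ℝ)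
    (he : ∀ j, ∃ m : ℤ, (k j : ℝ) * θ = e j + m) (n : ℤ) (c : ℝ)
    (h : Tendsto (fun j => Int.fract ((n : ℝ) * θ + e j)) atTop (𝓝 c)) :
    Tendsto (fun j => (fun k : ℕ => Int.fract ((k : ℝ) * θ) - 1 / 2) (n + (k j : ℤ)).toNat)
      atTop (𝓝 (c - 1 / 2)) := by
  refine (h.sub_const (1 / 2)).congr' ?_
  filter_upwards [hk.tendsto_atTop.eventually_ge_atTop (-n).toNat] with j hj
  have h0 : 0 ≤ n + (k j : ℤ) := by omega
  have h1 : (((n + (k j : ℤ)).toNat : ℕ) : ℝ) = n + k j := by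
    have : (((n + (k j : ℤ)).toNat : ℕ) : ℤ) = n + k j := Int.toNat_of_nonneg h0
    exact_mod_cast congrArg (fun z : ℤ => (z : ℝ)) this
  obtain ⟨m, hm⟩ := he j
  simp only [h1]
  rw [add_mul, hm, ← add_assoc, Int.fract_add_intCast]

lemma right_aux (x : ℝ) (e : ℕ → ℝ) (h0 : ∀ j, 0 ≤ e j) (he : Tendsto e atTop (𝓝 0)) :
    Tendsto (fun j => Int.fract (x + e j)) atTop (𝓝 (Int.fract x)) := by
  have h1 : Tendsto (fun j => Int.fract x + e j) atTop (𝓝 (Int.fract x)) := by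
    simpa using he.const_add (Int.fract x)
  refine h1.congr' ?_
  filter_upwards [h1.eventually_lt_const (Int.fract_lt_one x)] with j hj
  symm
  rw [Int.fract_eq_iff]
  refine ⟨add_nonneg (Int.fract_nonneg x) (h0 j), hj, ⌊x⌋, ?_⟩
  rw [← Int.self_sub_floor]; ring

lemma fract_coe (θ : ℝ) (k : ℕ) :
    ∃ m : ℤ, (k : ℝ) * θ = Int.fract ((k : ℝ) * θ) + m :=
  ⟨⌊(k : ℝ) * θ⌋, (Int.fract_add_floor _).symm⟩

lemma right_lim (θ : ℝ) (k : ℕ → ℕ) (hk : StrictMono k)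
    (he : Tendsto (fun j => Int.fract ((k j : ℝ) * θ)) atTop (𝓝 0)) (n : ℤ) :
    Tendsto (fun j => (fun k : ℕ => Int.fract ((k : ℝ) * θ) - 1 / 2) (n + (k j : ℤ)).toNat)
      atTop (𝓝 (Int.fract ((n : ℝ) * θ) - 1 / 2)) :=
  lim_aux θ k hk _ (fun j => fract_coe θ (k j)) n _
    (right_aux _ _ (fun _ => Int.fract_nonneg _) he)

/-- Hecke's example: for irrational `θ` and `a_k = {kθ} - 1/2`, the sequence
`b⁻_n = {nθ} - 1/2` is the unique renascent right limit of `(a_k)`, and the sequence `b⁺`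
with `b⁺_0 = 1/2` and `b⁺_n = {nθ} - 1/2` for `n ≠ 0` is also a right limit of `(a_k)`. -/
theorem stmt_19 (θ : ℝ) (hθ : Irrational θ) :
    -- (i) b⁻ is a renascent right limit of (a_k)
    (IsRightLimit (fun k : ℕ => Int.fract ((k : ℝ) * θ) - 1 / 2)
        (fun n : ℤ => Int.fract ((n : ℝ) * θ) - 1 / 2) ∧
      ∀ n : ℕ, Int.fract (((n : ℤ) : ℝ) * θ) - 1 / 2 = Int.fract ((n : ℝ) * θ) - 1 / 2) ∧
    -- (i) ... and it is the only renascent right limit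
    (∀ bb : ℤ → ℝ, IsRightLimit (fun k : ℕ => Int.fract ((k : ℝ) * θ) - 1 / 2) bb →
      (∀ n : ℕ, bb (n : ℤ) = Int.fract ((n : ℝ) * θ) - 1 / 2) →
      bb = fun n : ℤ => Int.fract ((n : ℝ) * θ) - 1 / 2) ∧
    -- (ii) b⁺ is also a right limit
    IsRightLimit (fun k : ℕ => Int.fract ((k : ℝ) * θ) - 1 / 2)
      (fun n : ℤ => if n = 0 then 1 / 2 else Int.fract ((n : ℝ) * θ) - 1 / 2) := by
  refine ⟨⟨?_, fun n => by simp⟩, ?_, ?_⟩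
  · obtain ⟨k, hk, hP⟩ := extraction_forall_of_frequently
      (P := fun j k => 0 < Int.fract ((k : ℝ) * θ) ∧ Int.fract ((k : ℝ) * θ) < 1 / ((j : ℝ) + 1))
      (fun j => freq_fract θ hθ le_rfl (by positivity)
        (by rw [div_le_one (by positivity)]; linarith [(Nat.cast_nonneg j : (0 : ℝ) ≤ j)]))
    refine ⟨k, hk, fun j => ?_, fun n => right_lim θ k hk ?_ n⟩
    · rcases Nat.eq_zero_or_pos (k j) with h | h
      · have := (hP j).1
        simp [h] at this
      · exact h
    · exact squeeze_zero (fun j => (hP j).1.le) (fun j => (hP j).2.le)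
        tendsto_one_div_add_atTop_nhds_zero_nat
  · rintro bb ⟨k, hk, -, hlim⟩ hbb
    have h0 := hlim 0
    have hb0 : bb 0 = -(1 / 2) := by simpa using hbb 0
    have he : Tendsto (fun j => Int.fract ((k j : ℝ) * θ)) atTop (𝓝 0) := by
      have := h0.add_const (1 / 2)
      simpa [hb0] using this
    funext n
    exact tendsto_nhds_unique (hlim n) (right_lim θ k hk he n)
  · obtain ⟨k, hk, hP⟩ := extraction_forall_of_frequently
      (P := fun j k => 1 - 1 / ((j : ℝ) + 1) < Int.fract ((k : ℝ) * θ) ∧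
        Int.fract ((k : ℝ) * θ) < 1)
      (fun j => freq_fract θ hθ
        (sub_nonneg.2 (by rw [div_le_one (by positivity)]; linarith [(Nat.cast_nonneg j : (0 : ℝ) ≤ j)]))
        (sub_lt_self _ (by positivity)) le_rfl)
    have hnn : ∀ j : ℕ, (0 : ℝ) ≤ 1 - 1 / ((j : ℝ) + 1) := fun j =>
      sub_nonneg.2 (by rw [div_le_one (by positivity)]; linarith [(Nat.cast_nonneg j : (0 : ℝ) ≤ j)])
    have hone : Tendsto (fun j => Int.fract ((k j : ℝ) * θ)) atTop (𝓝 1) := by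
      refine tendsto_of_tendsto_of_tendsto_of_le_of_le (g := fun j : ℕ => 1 - 1 / ((j : ℝ) + 1))
        (h := fun _ => 1) ?_ tendsto_const_nhds (fun j => (hP j).1.le) (fun j => (hP j).2.le)
      simpa using (tendsto_one_div_add_atTop_nhds_zero_nat (𝕜 := ℝ)).const_sub 1
    refine ⟨k, hk, fun j => ?_, fun n => ?_⟩
    · rcases Nat.eq_zero_or_pos (k j) with h | h
      · have := (hnn j).trans_lt (hP j).1
        simp [h] at this
      · exact h
    · rcases eq_or_ne n 0 with rfl | hn
      · have := hone.sub_const (1 / 2)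
        norm_num at this ⊢
        exact this
      · beta_reduce
        rw [if_neg hn]
        refine lim_aux θ k hk (fun j => Int.fract ((k j : ℝ) * θ) - 1) (fun j => ?_) n _ ?_
        · obtain ⟨m, hm⟩ := fract_coe θ (k j)
          refine ⟨m + 1, ?_⟩
          push_cast
          linarith
        · have hc : ContinuousAt (Int.fract : ℝ → ℝ) ((n : ℝ) * θ) :=
            continuousAt_fract ((hθ.intCast_mul hn).ne_int _)
          refine hc.tendsto.comp ?_
          simpa using (hone.sub_const 1).const_add ((n : ℝ) * θ)
end
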